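/- arXiv:math/0607194 — 8 statements merged into one kernel-verified Lean document; each statement's English description precedes it below -/
import Mathlib

section
/- Let r, c ∈ ℤ³ be vectors of positive integers with r₁+r₂+r₃ = c₁+c₂+c₃, and suppose (r,c) ≠ ((1,1,1),(1,1,1)) (i.e., the transportation polytope T_{rc} is not the Birkhoff polytope B₃). Let L be the (finite) set of all 3×3 matrices with nonnegative integer entries whose i-th row sum is r_i and j-th column sum is c_j. Let k be a field and let φ : k[x_A : A ∈ L] → k[t₀, t_{ij} : 1 ≤ i,j ≤ 3] be the k-algebra homomorphism sending x_A to t₀ · ∏_{i,j} t_{ij}^{A_{ij}}. Then the toric ideal ker φ is generated by its elements of total degree at most 2. -/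
abbrev BM := Fin 3 → Fin 3 → Bool
def mkB (a b c d e f g h i : Bool) : BM := fun x y =>
  match x, y with
  | 0, 0 => a | 0, 1 => b | 0, 2 => c
  | 1, 0 => d | 1, 1 => e | 1, 2 => f
  | 2, 0 => g | 2, 1 => h | 2, 2 => i
theorem mkB_eta (a : BM) : a = mkB (a 0 0) (a 0 1) (a 0 2) (a 1 0) (a 1 1) (a 1 2) (a 2 0) (a 2 1) (a 2 2) := by
  funext x y
  fin_cases x <;> fin_cases y <;> rfl
def rs (a : BM) (i : Fin 3) : ℕ := (a i 0).toNat + (a i 1).toNat + (a i 2).toNat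
def cs (a : BM) (j : Fin 3) : ℕ := (a 0 j).toNat + (a 1 j).toNat + (a 2 j).toNat

/-- quantify over all Boolean matrices with fast decidability -/
def allB (P : BM → Bool) : Bool :=
  [false, true].all fun a => [false, true].all fun b => [false, true].all fun c =>
  [false, true].all fun d => [false, true].all fun e => [false, true].all fun f =>
  [false, true].all fun g => [false, true].all fun h => [false, true].all fun i =>
    P (mkB a b c d e f g h i)

theorem allB_spec {P : BM → Bool} (h : allB P = true) (a : BM) : P a = true := by
  rw [mkB_eta a]
  have hb : ∀ x : Bool, x ∈ [false, true] := by decide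
  simp only [allB, List.all_eq_true] at h
  exact h _ (hb _) _ (hb _) _ (hb _) _ (hb _) _ (hb _) _ (hb _) _ (hb _) _ (hb _) _ (hb _)

def eqB (a b : BM) : Bool := decide (∀ i j, a i j = b i j)
theorem eqB_iff (a b : BM) : eqB a b = true ↔ a = b := by
  simp [eqB, funext_iff]

/-- all Boolean matrices with the margins of `a` -/
def allM (a : BM) (P : BM → Bool) : Bool :=
  [false, true].all fun x0 => [false, true].all fun x1 => [false, true].all fun x2 =>
  ! (x0.toNat + x1.toNat + x2.toNat == rs a 0) ||
  [false, true].all fun x3 => [false, true].all fun x4 => [false, true].all fun x5 =>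
  ! (x3.toNat + x4.toNat + x5.toNat == rs a 1) ||
  [false, true].all fun x6 => ! (x0.toNat + x3.toNat + x6.toNat == cs a 0) || 
  [false, true].all fun x7 => ! (x1.toNat + x4.toNat + x7.toNat == cs a 1) || 
  [false, true].all fun x8 => ! (x2.toNat + x5.toNat + x8.toNat == cs a 2) || 
    P (mkB x0 x1 x2 x3 x4 x5 x6 x7 x8)

theorem allM_spec {a : BM} {P : BM → Bool} (h : allM a P = true) (b : BM)
    (hr : ∀ i, rs b i = rs a i) (hc : ∀ j, cs b j = cs a j) : P b = true := by
  rw [mkB_eta b]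
  have hb : ∀ x : Bool, x ∈ [false, true] := by decide
  simp only [allM, List.all_eq_true, Bool.or_eq_true, Bool.not_eq_true', beq_eq_false_iff_ne] at h
  have h1 := (h _ (hb (b 0 0)) _ (hb (b 0 1)) _ (hb (b 0 2))).resolve_left (not_not.2 (hr 0))
  have h2 := (h1 _ (hb (b 1 0)) _ (hb (b 1 1)) _ (hb (b 1 2))).resolve_left (not_not.2 (hr 1))
  have h3 := (h2 _ (hb (b 2 0))).resolve_left (not_not.2 (hc 0))
  have h4 := (h3 _ (hb (b 2 1))).resolve_left (not_not.2 (hc 1))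
  exact (h4 _ (hb (b 2 2))).resolve_left (not_not.2 (hc 2))

def anyP (Q : Fin 3 → Fin 3 → Bool) : Bool := [0, 1, 2].any fun i => [0, 1, 2].any fun j => Q i j
theorem anyP_spec {Q : Fin 3 → Fin 3 → Bool} (h : anyP Q = true) : ∃ i j, Q i j = true := by
  simp only [anyP, List.any_eq_true] at h
  obtain ⟨i, -, j, -, h⟩ := h
  exact ⟨i, j, h⟩
def allP (Q : Fin 3 → Fin 3 → Bool) : Bool := [0, 1, 2].all fun i => [0, 1, 2].all fun j => Q i j
theorem allP_spec {Q : Fin 3 → Fin 3 → Bool} (h : allP Q = true) (i j) : Q i j = true := by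
  have hb : ∀ x : Fin 3, x ∈ [0, 1, 2] := by decide
  simp only [allP, List.all_eq_true] at h
  exact h _ (hb i) _ (hb j)

def margins (a : BM) (n : ℕ) : Bool :=
  rs a 0 == n && rs a 1 == n && rs a 2 == n && cs a 0 == n && cs a 1 == n && cs a 2 == n

theorem facet_bool : allB (fun a => margins a 1 || margins a 2 ||
    anyP fun i j => allM a fun b => ! (b i j == a i j) || eqB b a) = true := by
  decide +kernel

theorem perm_bool : allB (fun a => ! margins a 1 || allP fun i j =>
    ! a i j || anyP fun i1 j1 => anyP fun i2 j2 => allM a fun b => eqB b a || ! (b i1 j1 == a i1 j1)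
      || allM a fun b' => eqB b' a || ! (b' i2 j2 == a i2 j2) ||
      (! eqB b b' && allP fun k l => ! a k l || b k l || b' k l || (decide (k = i) && decide (l = j)))) = true := by
  decide +kernel

theorem perm_bool2 : allB (fun a => ! margins a 1 || allP fun i j =>
    a i j || anyP fun i1 j1 => allM a fun b => eqB b a || ! (b i1 j1 == a i1 j1)
      || b i j) = true := by
  decide +kernel

theorem coperm_bool : allB (fun a => ! margins a 2 || 
    anyP fun i1 j1 => anyP fun i2 j2 => allM a fun b => eqB b a || ! (b i1 j1 == a i1 j1)
      || allM a fun b' => eqB b' a || ! (b' i2 j2 == a i2 j2) ||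
      (! eqB b b' && allP fun k l => ! a k l || b k l || b' k l)) = true := by
  decide +kernel

theorem round_bool : allB (fun a => 
    ! (rs a 0 % 2 == 0 && rs a 1 % 2 == 0 && rs a 2 % 2 == 0 && cs a 0 % 2 == 0 && cs a 1 % 2 == 0 && cs a 2 % 2 == 0) 
   || ! allB fun x => ! ((allP fun i j => ! x i j || a i j) &&
     2 * rs x 0 == rs a 0 && 2 * rs x 1 == rs a 1 && 2 * rs x 2 == rs a 2 &&
     2 * cs x 0 == cs a 0 && 2 * cs x 1 == cs a 1 && 2 * cs x 2 == cs a 2)) = true := by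
  decide +kernel

theorem allB_intro {P : BM → Bool} (h : ∀ a, P a = true) : allB P = true := by
  simp only [allB, List.all_eq_true]
  intros
  exact h _

theorem facet (a : BM) : margins a 1 = true ∨ margins a 2 = true ∨
    ∃ i j, ∀ b : BM, (∀ i, rs b i = rs a i) → (∀ j, cs b j = cs a j) → b i j = a i j → b = a := by
  have h := allB_spec facet_bool a
  simp only [Bool.or_eq_true] at h
  rcases h with (h | h) | h
  · exact Or.inl h
  · exact Or.inr (Or.inl h)
  · right; right
    obtain ⟨i, j, h⟩ := anyP_spec h
    refine ⟨i, j, fun b hr hc hb => ?_⟩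
    have := allM_spec h b hr hc
    simpa [hb, eqB_iff] using this

theorem perm1 (a : BM) (ha : margins a 1 = true) (i j : Fin 3) (hij : a i j = true) :
    ∃ i1 j1 i2 j2, ∀ b b' : BM, (∀ i, rs b i = rs a i) → (∀ j, cs b j = cs a j) →
      (∀ i, rs b' i = rs a i) → (∀ j, cs b' j = cs a j) → b i1 j1 = a i1 j1 → b' i2 j2 = a i2 j2 →
      b ≠ a → b' ≠ a → b ≠ b' ∧ ∀ k l, (a k l).toNat ≤ (b k l).toNat + (b' k l).toNat +
        if k = i ∧ l = j then 1 else 0 := by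
  have h := allB_spec perm_bool a
  simp only [ha, Bool.not_true, Bool.false_or] at h
  have h := allP_spec h i j
  simp only [hij, Bool.not_true, Bool.false_or] at h
  obtain ⟨i1, j1, h⟩ := anyP_spec h
  obtain ⟨i2, j2, h⟩ := anyP_spec h
  refine ⟨i1, j1, i2, j2, fun b b' hr hc hr' hc' h1 h2 n1 n2 => ?_⟩
  have h := allM_spec h b hr hc
  have e1 : eqB b a = false := by rw [Bool.eq_false_iff, Ne, eqB_iff]; exact n1
  simp only [e1, h1, beq_self_eq_true, Bool.not_true, Bool.false_or] at h
  have h := allM_spec h b' hr' hc'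
  have e2 : eqB b' a = false := by rw [Bool.eq_false_iff, Ne, eqB_iff]; exact n2
  simp only [e2, h2, beq_self_eq_true, Bool.not_true, Bool.false_or, Bool.and_eq_true] at h
  refine ⟨fun e => ?_, fun k l => ?_⟩
  · have := h.1
    rw [(eqB_iff b b').2 e] at this
    simp at this
  · have := allP_spec h.2 k l
    cases h1 : a k l <;> cases h2 : b k l <;> cases h3 : b' k l <;> simp_all <;> omega

theorem perm2 (a : BM) (ha : margins a 1 = true) (i j : Fin 3) (hij : a i j = false) :
    ∃ i1 j1, ∀ b : BM, (∀ i, rs b i = rs a i) → (∀ j, cs b j = cs a j) →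
      b i1 j1 = a i1 j1 → b ≠ a → b i j = true := by
  have h := allB_spec perm_bool2 a
  simp only [ha, Bool.not_true, Bool.false_or] at h
  have h := allP_spec h i j
  simp only [hij, Bool.false_or] at h
  obtain ⟨i1, j1, h⟩ := anyP_spec h
  refine ⟨i1, j1, fun b hr hc h1 n1 => ?_⟩
  have h := allM_spec h b hr hc
  have e1 : eqB b a = false := by rw [Bool.eq_false_iff, Ne, eqB_iff]; exact n1
  simpa only [e1, h1, beq_self_eq_true, Bool.not_true, Bool.false_or] using h

theorem coperm (a : BM) (ha : margins a 2 = true) :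
    ∃ i1 j1 i2 j2, ∀ b b' : BM, (∀ i, rs b i = rs a i) → (∀ j, cs b j = cs a j) →
      (∀ i, rs b' i = rs a i) → (∀ j, cs b' j = cs a j) → b i1 j1 = a i1 j1 → b' i2 j2 = a i2 j2 →
      b ≠ a → b' ≠ a → b ≠ b' ∧ ∀ k l, (a k l).toNat ≤ (b k l).toNat + (b' k l).toNat := by
  have h := allB_spec coperm_bool a
  simp only [ha, Bool.not_true, Bool.false_or] at h
  obtain ⟨i1, j1, h⟩ := anyP_spec h
  obtain ⟨i2, j2, h⟩ := anyP_spec h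
  refine ⟨i1, j1, i2, j2, fun b b' hr hc hr' hc' h1 h2 n1 n2 => ?_⟩
  have h := allM_spec h b hr hc
  have e1 : eqB b a = false := by rw [Bool.eq_false_iff, Ne, eqB_iff]; exact n1
  simp only [e1, h1, beq_self_eq_true, Bool.not_true, Bool.false_or] at h
  have h := allM_spec h b' hr' hc'
  have e2 : eqB b' a = false := by rw [Bool.eq_false_iff, Ne, eqB_iff]; exact n2
  simp only [e2, h2, beq_self_eq_true, Bool.not_true, Bool.false_or, Bool.and_eq_true] at h
  refine ⟨fun e => ?_, fun k l => ?_⟩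
  · have := h.1
    rw [(eqB_iff b b').2 e] at this
    simp at this
  · have := allP_spec h.2 k l
    cases h1 : a k l <;> cases h2 : b k l <;> cases h3 : b' k l <;> simp_all

theorem round_exists (a : BM) (hr : ∀ i, rs a i % 2 = 0) (hc : ∀ j, cs a j % 2 = 0) :
    ∃ x : BM, (∀ i j, x i j = true → a i j = true) ∧ (∀ i, 2 * rs x i = rs a i) ∧
      (∀ j, 2 * cs x j = cs a j) := by
  have h := allB_spec round_bool a
  by_contra hcon
  have h2 : allB (fun x => ! ((allP fun i j => ! x i j || a i j) &&
     2 * rs x 0 == rs a 0 && 2 * rs x 1 == rs a 1 && 2 * rs x 2 == rs a 2 &&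
     2 * cs x 0 == cs a 0 && 2 * cs x 1 == cs a 1 && 2 * cs x 2 == cs a 2)) = true := by
    refine allB_intro fun x => ?_
    by_contra h3
    apply hcon
    simp only [Bool.not_eq_true, Bool.not_eq_false', Bool.and_eq_true, beq_iff_eq] at h3
    obtain ⟨⟨⟨⟨⟨⟨h0, h1⟩, h2⟩, h3⟩, h4⟩, h5⟩, h6⟩ := h3
    refine ⟨x, fun i j hx => ?_, fun i => ?_, fun j => ?_⟩
    · have := allP_spec h0 i j
      simpa [hx] using this
    · fin_cases i <;> assumption
    · fin_cases j <;> assumption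
  rw [h2] at h
  simp [hr, hc] at h

abbrev NM := Matrix (Fin 3) (Fin 3) ℕ

/-- same margins -/
def SM (A B : NM) : Prop := (∀ i, ∑ j, A i j = ∑ j, B i j) ∧ (∀ j, ∑ i, A i j = ∑ i, B i j)

theorem split_pair (A B : NM) (h : SM A B) :
    ∃ C D : NM, SM A C ∧ SM A D ∧ (∀ i j, C i j + D i j = A i j + B i j) ∧
      (∀ i j, C i j ≤ D i j + 1 ∧ D i j ≤ C i j + 1) := by
  obtain ⟨hr, hc⟩ := h
  simp only [Fin.sum_univ_three] at hr hc
  let a : BM := fun i j => decide ((A i j + B i j) % 2 = 1)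
  have ha : ∀ i j, (a i j).toNat = (A i j + B i j) % 2 := by
    intro i j
    simp only [a]
    rcases Nat.mod_two_eq_zero_or_one (A i j + B i j) with h | h <;> simp [h]
  obtain ⟨x, hx, hxr, hxc⟩ := round_exists a
    (fun i => by have := hr i; simp only [rs, ha]; omega)
    (fun j => by have := hc j; simp only [cs, ha]; omega)
  have hx' : ∀ i j, (x i j).toNat ≤ (A i j + B i j) % 2 := by
    intro i j
    rw [← ha]
    have := hx i j
    cases h1 : x i j <;> simp_all
  have e := fun i j => Nat.div_add_mod (A i j + B i j) 2
  simp only [rs, cs, ha] at hxr hxc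
  refine ⟨fun i j => (A i j + B i j) / 2 + (x i j).toNat,
    fun i j => (A i j + B i j) / 2 + ((A i j + B i j) % 2 - (x i j).toNat), ⟨?_, ?_⟩, ⟨?_, ?_⟩, ?_, ?_⟩
  · intro i
    simp only [Fin.sum_univ_three]
    have := hr i; have := hxr i
    omega
  · intro i
    simp only [Fin.sum_univ_three]
    have := hc i; have := hxc i
    omega
  · intro i
    simp only [Fin.sum_univ_three]
    have := hr i; have := hxr i
    have := hx' i 0; have := hx' i 1; have := hx' i 2
    omega
  · intro i
    simp only [Fin.sum_univ_three]
    have := hc i; have := hxc i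
    have := hx' 0 i; have := hx' 1 i; have := hx' 2 i
    omega
  · intro i j
    have := hx' i j
    simp only; omega
  · intro i j
    have := hx' i j
    simp only; omega

theorem sq_le_aux (a b c d : ℕ) (h : c + d = a + b) (h1 : c ≤ d + 1) (h2 : d ≤ c + 1) :
    c ^ 2 + d ^ 2 ≤ a ^ 2 + b ^ 2 ∧ (b + 2 ≤ a → c ^ 2 + d ^ 2 < a ^ 2 + b ^ 2) := by
  have hcd : c = d ∨ c = d + 1 ∨ d = c + 1 := by omega
  have hb : (b : ℤ) = c + d - a := by have : (c : ℤ) + d = a + b := by exact_mod_cast h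
                                      linarith
  have ha' : (a : ℤ) ≤ c ∧ (a : ℤ) ≤ d ∨ (c : ℤ) ≤ a ∧ (d : ℤ) ≤ a := by omega
  have key : ((a : ℤ) - c) * (a - d) ≥ 0 := by
    rcases ha' with h | h
    · nlinarith
    · nlinarith
  constructor
  · zify
    rw [hb]; nlinarith
  · intro h3
    zify
    have : ((a : ℤ) - c) * (a - d) > 0 := by
      have : (c : ℤ) < a := by omega
      have : (d : ℤ) < a := by omega
      nlinarith
    rw [hb]; nlinarith

section
variable {L : Set NM}

def en (M : Multiset L) (i j : Fin 3) : ℕ := (M.map fun A : L => (A : NM) i j).sum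
def sqs (M : Multiset L) : ℕ := (M.map fun A : L => ∑ i, ∑ j, (A : NM) i j ^ 2).sum

theorem en_cons (A : L) (M : Multiset L) (i j) : en (A ::ₘ M) i j = (A : NM) i j + en M i j := by
  simp [en]
theorem sqs_cons (A : L) (M : Multiset L) :
    sqs (A ::ₘ M) = (∑ i, ∑ j, (A : NM) i j ^ 2) + sqs M := by
  simp [sqs]

theorem extract_two (M : Multiset L) (A B : L) (hA : A ∈ M) (hB : B ∈ M) (h : A ≠ B) :
    ∃ M', M = A ::ₘ B ::ₘ M' := by
  obtain ⟨M1, rfl⟩ := Multiset.exists_cons_of_mem hA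
  have : B ∈ M1 := by
    rcases Multiset.mem_cons.1 hB with h1 | h1
    · exact absurd h1.symm h
    · exact h1
  obtain ⟨M2, rfl⟩ := Multiset.exists_cons_of_mem this
  exact ⟨M2, rfl⟩

structure Good (L : Set NM) (R : Multiset L → Multiset L → Prop) : Prop where
  refl : ∀ M, R M M
  symm : ∀ M N, R M N → R N M
  trans : ∀ M N P, R M N → R N P → R M P
  cons : ∀ A M N, R M N → R (A ::ₘ M) (A ::ₘ N)
  quad : ∀ (A B C D : L) (M : Multiset L), (∀ i j, (A : NM) i j + (B : NM) i j = (C : NM) i j + (D : NM) i j) →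
    R (A ::ₘ B ::ₘ M) (C ::ₘ D ::ₘ M)

variable {R : Multiset L → Multiset L → Prop}

theorem balance (hSM : ∀ A ∈ L, ∀ B ∈ L, SM A B) (hcl : ∀ A ∈ L, ∀ B, SM A B → B ∈ L)
    (hR : Good L R) (n : ℕ) : ∀ M : Multiset L, sqs M = n → ∃ M', R M M' ∧ M'.card = M.card ∧
      (∀ i j, en M' i j = en M i j) ∧
      ∀ A ∈ M', ∀ B ∈ M', ∀ i j, (A : NM) i j ≤ (B : NM) i j + 1 := by
  induction n using Nat.strong_induction_on with
  | _ n ih =>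
  intro M hM
  by_cases hbal : ∀ A ∈ M, ∀ B ∈ M, ∀ i j, (A : NM) i j ≤ (B : NM) i j + 1
  · exact ⟨M, hR.refl M, rfl, fun _ _ => rfl, hbal⟩
  push Not at hbal
  obtain ⟨A, hA, B, hB, i, j, hij⟩ := hbal
  have hne : A ≠ B := by rintro rfl; omega
  obtain ⟨M1, rfl⟩ := extract_two M A B hA hB hne
  obtain ⟨C, D, hC, hD, hs, hb⟩ := split_pair A B (hSM _ A.2 _ B.2)
  let C' : L := ⟨C, hcl _ A.2 _ hC⟩
  let D' : L := ⟨D, hcl _ A.2 _ hD⟩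
  have hlt : sqs (C' ::ₘ D' ::ₘ M1) < n := by
    rw [← hM]
    simp only [sqs_cons, C', D', ← add_assoc]
    apply Nat.add_lt_add_right
    simp only [← Finset.sum_add_distrib]
    refine Finset.sum_lt_sum (fun i _ => Finset.sum_le_sum fun j _ =>
      (sq_le_aux _ _ _ _ (hs i j) (hb i j).1 (hb i j).2).1) ⟨i, Finset.mem_univ _, ?_⟩
    refine Finset.sum_lt_sum (fun j _ =>
      (sq_le_aux _ _ _ _ (hs i j) (hb i j).1 (hb i j).2).1) ⟨j, Finset.mem_univ _, ?_⟩
    exact (sq_le_aux _ _ _ _ (hs i j) (hb i j).1 (hb i j).2).2 (by omega)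
  obtain ⟨M', h1, h2, h3, h4⟩ := ih _ hlt _ rfl
  refine ⟨M', hR.trans _ _ _ (hR.quad A B C' D' M1 fun i j => (hs i j).symm) h1, by simpa using h2,
    fun i j => ?_, h4⟩
  rw [h3]
  simp only [en_cons, C', D']
  have := hs i j
  omega

theorem en_le (M : Multiset L) (i j) (q : ℕ) (h : ∀ B ∈ M, (B : NM) i j ≤ q) :
    en M i j ≤ M.card * q := by
  have := Multiset.sum_le_card_nsmul (M.map fun A : L => (A : NM) i j) q (by
    intro x hx
    obtain ⟨B, hB, rfl⟩ := Multiset.mem_map.1 hx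
    exact h B hB)
  simpa [en] using this

theorem le_en (M : Multiset L) (i j) (q : ℕ) (h : ∀ B ∈ M, q ≤ (B : NM) i j) :
    M.card * q ≤ en M i j := by
  have := Multiset.card_nsmul_le_sum (s := M.map fun A : L => (A : NM) i j) (a := q) (by
    intro x hx
    obtain ⟨B, hB, rfl⟩ := Multiset.mem_map.1 hx
    exact h B hB)
  simpa [en] using this

theorem cell (M : Multiset L) (hb : ∀ A ∈ M, ∀ B ∈ M, ∀ i j, (A : NM) i j ≤ (B : NM) i j + 1)
    (A : L) (hA : A ∈ M) (i j) :
    (A : NM) i j = en M i j / M.card ∨ (A : NM) i j = en M i j / M.card + 1 := by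
  set q := en M i j / M.card with hq
  obtain ⟨M1, rfl⟩ := Multiset.exists_cons_of_mem hA
  have hpos : 0 < (A ::ₘ M1).card := by simp
  have h1 : (A ::ₘ M1).card * q ≤ en (A ::ₘ M1) i j := Nat.mul_div_le _ _
  have h2 : en (A ::ₘ M1) i j < (A ::ₘ M1).card * (q + 1) := Nat.lt_mul_div_succ _ hpos
  by_contra hcon
  push Not at hcon
  rcases lt_or_ge ((A : NM) i j) q with h | h
  · have : en M1 i j ≤ M1.card * q := en_le M1 i j q fun B hB => by
      have := hb B (Multiset.mem_cons_of_mem hB) A hA i j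
      omega
    rw [en_cons, Multiset.card_cons, add_mul] at h1
    omega
  · have h3 := le_en (A ::ₘ M1) i j (q + 1) fun B hB => by
      have := hb A hA B hB i j
      omega
    omega

theorem transfer (m : NM) (M N : Multiset L) (hc : M.card = N.card)
    (he : ∀ i j, en M i j = en N i j)
    (hM : ∀ A ∈ M, ∀ i j, (A : NM) i j = m i j ∨ (A : NM) i j = m i j + 1)
    (hN : ∀ A ∈ N, ∀ i j, (A : NM) i j = m i j ∨ (A : NM) i j = m i j + 1)
    (A : L) (hA : A ∈ M) (i j) : ∃ B ∈ N, (B : NM) i j = (A : NM) i j := by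
  by_contra hcon
  push Not at hcon
  obtain ⟨M1, rfl⟩ := Multiset.exists_cons_of_mem hA
  have he := he i j
  rw [en_cons] at he
  rw [Multiset.card_cons] at hc
  rcases hM A hA i j with h | h
  · have h1 := le_en N i j (m i j + 1) fun B hB => by
      have := hN B hB i j
      have := hcon B hB
      omega
    have h2 := en_le M1 i j (m i j + 1) fun B hB => by
      have := hM B (Multiset.mem_cons_of_mem hB) i j
      omega
    rw [← hc, add_mul] at h1
    omega
  · have h1 := en_le N i j (m i j) fun B hB => by
      have := hN B hB i j
      have := hcon B hB
      omega
    have h2 := le_en M1 i j (m i j) fun B hB => by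
      have := hM B (Multiset.mem_cons_of_mem hB) i j
      omega
    rw [← hc, add_mul] at h1
    omega

/-- bit pattern in the cell -/
def bits (m A : NM) : BM := fun i j => decide (A i j = m i j + 1)

theorem bits_spec {m A : NM} {i j} (h : A i j = m i j ∨ A i j = m i j + 1) :
    A i j = m i j + (bits m A i j).toNat := by
  rcases h with h | h <;> simp [bits, h]

theorem bits_margin {m A B : NM} (hA : ∀ i j, A i j = m i j ∨ A i j = m i j + 1)
    (hB : ∀ i j, B i j = m i j ∨ B i j = m i j + 1) (h : SM A B) :
    (∀ i, rs (bits m A) i = rs (bits m B) i) ∧ (∀ j, cs (bits m A) j = cs (bits m B) j) := by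
  obtain ⟨hr, hc⟩ := h
  simp only [Fin.sum_univ_three] at hr hc
  have a := fun i j => bits_spec (hA i j)
  have b := fun i j => bits_spec (hB i j)
  constructor
  · intro i
    have := hr i
    have := a i 0; have := a i 1; have := a i 2
    have := b i 0; have := b i 1; have := b i 2
    simp only [rs]; omega
  · intro i
    have := hc i
    have := a 0 i; have := a 1 i; have := a 2 i
    have := b 0 i; have := b 1 i; have := b 2 i
    simp only [cs]; omega

theorem bits_inj {m : NM} {A B : L} (hA : ∀ i j, (A : NM) i j = m i j ∨ (A : NM) i j = m i j + 1)
    (hB : ∀ i j, (B : NM) i j = m i j ∨ (B : NM) i j = m i j + 1) (h : bits m A = bits m B) :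
    A = B := by
  apply Subtype.ext
  ext i j
  rw [bits_spec (hA i j), bits_spec (hB i j), h]

/-- The key step: in a common cell, `N` can be moved to contain an element of `M`. -/
theorem share (hSM : ∀ A ∈ L, ∀ B ∈ L, SM A B) (hcl : ∀ A ∈ L, ∀ B, SM A B → B ∈ L)
    (hL1 : ∀ A ∈ L, ¬ ((∀ i, ∑ j, A i j = 1) ∧ (∀ j, ∑ i, A i j = 1)))
    (hR : Good L R) (m : NM) (M N : Multiset L) (hc : M.card = N.card) (hpos : M ≠ 0)
    (he : ∀ i j, en M i j = en N i j)
    (hM : ∀ A ∈ M, ∀ i j, (A : NM) i j = m i j ∨ (A : NM) i j = m i j + 1)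
    (hN : ∀ A ∈ N, ∀ i j, (A : NM) i j = m i j ∨ (A : NM) i j = m i j + 1) :
    ∃ A ∈ M, ∃ N', R N (A ::ₘ N') ∧ N.card = N'.card + 1 ∧
      ∀ i j, en N i j = en (A ::ₘ N') i j := by
  by_cases hsh : ∃ A ∈ M, A ∈ N
  · obtain ⟨A, hA, hAN⟩ := hsh
    obtain ⟨N', rfl⟩ := Multiset.exists_cons_of_mem hAN
    exact ⟨A, hA, N', hR.refl _, by simp, fun _ _ => rfl⟩
  push Not at hsh
  have hne : ∀ A ∈ M, ∀ B ∈ N, bits m B ≠ bits m A := by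
    intro A hA B hB h
    have := bits_inj (hN B hB) (hM A hA) h
    exact hsh A hA (this ▸ hB)
  have htr : ∀ A ∈ M, ∀ i j, ∃ B ∈ N, bits m B i j = bits m A i j := by
    intro A hA i j
    obtain ⟨B, hB, h⟩ := transfer m M N hc he hM hN A hA i j
    exact ⟨B, hB, by simp [bits, h]⟩
  have htr' : ∀ A ∈ N, ∀ i j, ∃ B ∈ M, bits m B i j = bits m A i j := by
    intro A hA i j
    obtain ⟨B, hB, h⟩ := transfer m N M hc.symm (fun i j => (he i j).symm) hN hM A hA i j
    exact ⟨B, hB, by simp [bits, h]⟩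
  have hmar : ∀ A ∈ M, ∀ B ∈ N, _ := fun A hA B hB =>
    bits_margin (hN B hB) (hM A hA) (hSM _ B.2 _ A.2)
  -- the final move
  have fin : ∀ A ∈ M, ∀ B ∈ N, ∀ B' ∈ N, B ≠ B' →
      (∀ k l, (A : NM) k l ≤ (B : NM) k l + (B' : NM) k l) → ∃ A ∈ M, ∃ N', R N (A ::ₘ N') ∧
        N.card = N'.card + 1 ∧ ∀ i j, en N i j = en (A ::ₘ N') i j := by
    intro A hA B hB B' hB' hBB hle
    obtain ⟨N1, rfl⟩ := extract_two N B B' hB hB' hBB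
    let C : NM := fun k l => (B : NM) k l + (B' : NM) k l - (A : NM) k l
    have hC : SM A C := by
      obtain ⟨h1, h2⟩ := hSM _ A.2 _ B.2
      obtain ⟨h3, h4⟩ := hSM _ A.2 _ B'.2
      simp only [Fin.sum_univ_three] at h1 h2 h3 h4
      constructor
      · intro i
        simp only [Fin.sum_univ_three, C]
        have := h1 i; have := h3 i
        have := hle i 0; have := hle i 1; have := hle i 2
        omega
      · intro i
        simp only [Fin.sum_univ_three, C]
        have := h2 i; have := h4 i
        have := hle 0 i; have := hle 1 i; have := hle 2 i
        omega
    refine ⟨A, hA, ⟨C, hcl _ A.2 _ hC⟩ ::ₘ N1, hR.quad _ _ _ _ _ fun i j => ?_, by simp,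
      fun i j => ?_⟩
    · have := hle i j
      simp only [C]; omega
    · have := hle i j
      simp only [en_cons, C]; omega
  obtain ⟨A0, hA0⟩ := Multiset.exists_mem_of_ne_zero hpos
  rcases facet (bits m A0) with h1 | h2 | ⟨i, j, h⟩
  · -- Birkhoff cell
    have hmg : ∀ A ∈ M, margins (bits m A) 1 = true := by
      intro A hA
      have := bits_margin (hM A hA) (hM A0 hA0) (hSM _ A.2 _ A0.2)
      simp only [margins, this.1, this.2] at h1 ⊢
      exact h1
    obtain ⟨i, j, hm⟩ : ∃ i j, 1 ≤ m i j := by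
      by_contra hcon
      push Not at hcon
      have hA := fun i j => bits_spec (hM A0 hA0 i j)
      have hm0 : ∀ i j, m i j = 0 := fun i j => by have := hcon i j; omega
      simp only [hm0, zero_add] at hA
      apply hL1 A0 A0.2
      simp only [margins, Bool.and_eq_true, beq_iff_eq, rs, cs] at h1
      obtain ⟨⟨⟨⟨⟨h1, h2⟩, h3⟩, h4⟩, h5⟩, h6⟩ := h1
      constructor
      · intro i
        simp only [Fin.sum_univ_three, hA]
        fin_cases i <;> assumption
      · intro i
        simp only [Fin.sum_univ_three, hA]
        fin_cases i <;> assumption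
    obtain ⟨A, hA, hAij⟩ : ∃ A ∈ M, bits m A i j = true := by
      by_cases h0 : bits m A0 i j = true
      · exact ⟨A0, hA0, h0⟩
      · obtain ⟨i1, j1, hp⟩ := perm2 (bits m A0) h1 i j (by simpa using h0)
        obtain ⟨B, hB, hBe⟩ := htr A0 hA0 i1 j1
        have hmm := hmar A0 hA0 B hB
        have hb := hp (bits m B) hmm.1 hmm.2 hBe (hne A0 hA0 B hB)
        obtain ⟨A, hA, hAe⟩ := htr' B hB i j
        exact ⟨A, hA, hAe.trans hb⟩
    obtain ⟨i1, j1, i2, j2, hp⟩ := perm1 (bits m A) (hmg A hA) i j hAij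
    obtain ⟨B, hB, hBe⟩ := htr A hA i1 j1
    obtain ⟨B', hB', hBe'⟩ := htr A hA i2 j2
    have hmm := hmar A hA B hB
    have hmm' := hmar A hA B' hB'
    obtain ⟨q1, q2⟩ := hp (bits m B) (bits m B') hmm.1 hmm.2 hmm'.1 hmm'.2 hBe hBe'
      (hne A hA B hB) (hne A hA B' hB')
    refine fin A hA B hB B' hB' (by rintro rfl; exact q1 rfl) fun k l => ?_
    have := q2 k l
    rw [bits_spec (hM A hA k l), bits_spec (hN B hB k l), bits_spec (hN B' hB' k l)]
    split_ifs at this with hkl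
    · obtain ⟨rfl, rfl⟩ := hkl
      omega
    · omega
  · obtain ⟨i1, j1, i2, j2, hp⟩ := coperm (bits m A0) h2
    obtain ⟨B, hB, hBe⟩ := htr A0 hA0 i1 j1
    obtain ⟨B', hB', hBe'⟩ := htr A0 hA0 i2 j2
    have hmm := hmar A0 hA0 B hB
    have hmm' := hmar A0 hA0 B' hB'
    obtain ⟨q1, q2⟩ := hp (bits m B) (bits m B') hmm.1 hmm.2 hmm'.1 hmm'.2 hBe hBe'
      (hne A0 hA0 B hB) (hne A0 hA0 B' hB')
    refine fin A0 hA0 B hB B' hB' (by rintro rfl; exact q1 rfl) fun k l => ?_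
    have := q2 k l
    rw [bits_spec (hM A0 hA0 k l), bits_spec (hN B hB k l), bits_spec (hN B' hB' k l)]
    omega
  · obtain ⟨B, hB, hBe⟩ := htr A0 hA0 i j
    have hmm := hmar A0 hA0 B hB
    exact absurd (h _ hmm.1 hmm.2 hBe) (hne A0 hA0 B hB)

theorem connect (hSM : ∀ A ∈ L, ∀ B ∈ L, SM A B) (hcl : ∀ A ∈ L, ∀ B, SM A B → B ∈ L)
    (hL1 : ∀ A ∈ L, ¬ ((∀ i, ∑ j, A i j = 1) ∧ (∀ j, ∑ i, A i j = 1)))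
    (hR : Good L R) (n : ℕ) : ∀ M N : Multiset L, M.card = n → N.card = n →
      (∀ i j, en M i j = en N i j) → R M N := by
  induction n with
  | zero =>
    intro M N hM hN _
    rw [Multiset.card_eq_zero] at hM hN
    subst hM hN
    exact hR.refl _
  | succ n ih =>
    intro M N hM hN he
    obtain ⟨M', rM, cM, eM, bM⟩ := balance hSM hcl hR _ M rfl
    obtain ⟨N', rN, cN, eN, bN⟩ := balance hSM hcl hR _ N rfl
    have he' : ∀ i j, en M' i j = en N' i j := fun i j => by rw [eM, eN, he]
    have hcc : M'.card = N'.card := by omega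
    obtain ⟨A, hA, N1, h1, h2, h3⟩ := share hSM hcl hL1 hR (fun i j => en M' i j / M'.card) M' N'
      hcc (by intro h; rw [h] at cM; simp at cM; omega) he'
      (fun A hA i j => cell M' bM A hA i j)
      (fun A hA i j => by rw [he', hcc]; exact cell N' bN A hA i j)
    obtain ⟨M1, rfl⟩ := Multiset.exists_cons_of_mem hA
    have : R M1 N1 := by
      refine ih M1 N1 (by rw [Multiset.card_cons] at cM; omega) (by omega) fun i j => ?_
      have h4 := he' i j
      rw [h3 i j, en_cons, en_cons] at h4
      omega
    exact hR.trans _ _ _ rM (hR.trans _ _ _ (hR.cons A _ _ this)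
      (hR.symm _ _ (hR.trans _ _ _ rN h1)))

end

section
open MvPolynomial
variable {L : Set NM} {k : Type*} [Field k]

/-- monomial of a multiset -/
noncomputable def mon (k : Type*) [Field k] (M : Multiset L) : MvPolynomial L k :=
  (M.map fun A => (X A : MvPolynomial L k)).prod

theorem mon_cons (A : L) (M : Multiset L) : mon k (A ::ₘ M) = X A * mon k M := by simp [mon]

theorem monomial_eq_mon (s : L →₀ ℕ) : (monomial s (1 : k)) = mon k (Finsupp.toMultiset s) := by
  rw [mon, Finsupp.toMultiset_map, Finsupp.prod_toMultiset, Finsupp.prod_mapDomain_index, monomial_eq]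
  · simp
  · simp
  · intros; rw [pow_add]

noncomputable def dexp (M : Multiset L) : Option (Fin 3 × Fin 3) →₀ ℕ :=
  Finsupp.equivFunOnFinite.symm fun o => o.elim M.card fun p => en M p.1 p.2

theorem monomial_dexp (M : Multiset L) : monomial (dexp M) (1 : k) =
    X none ^ M.card * ∏ i, ∏ j, X (some (i, j)) ^ en M i j := by
  rw [monomial_eq, Finsupp.prod_fintype _ _ (by simp), Fintype.prod_option, Fintype.prod_prod_type]
  simp [dexp]

theorem phi_mon (M : Multiset L) : (aeval (R := k) fun A : L =>
      (X none * ∏ i, ∏ j, X (some (i, j)) ^ ((A : Matrix (Fin 3) (Fin 3) ℕ) i j) :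
        MvPolynomial (Option (Fin 3 × Fin 3)) k)) (mon k M) = monomial (dexp M) 1 := by
  rw [monomial_dexp]
  induction M using Multiset.induction_on with
  | empty => simp [mon, en]
  | cons A M ih =>
    rw [mon_cons, map_mul, ih, aeval_X]
    simp only [en_cons, pow_add, Multiset.card_cons, Finset.prod_mul_distrib]
    ring

theorem dexp_eq {M N : Multiset L} (h : dexp M = dexp N) :
    M.card = N.card ∧ ∀ i j, en M i j = en N i j := by
  refine ⟨?_, fun i j => ?_⟩
  · simpa [dexp] using DFunLike.congr_fun h none
  · simpa [dexp] using DFunLike.congr_fun h (some (i, j))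

end

open MvPolynomial

/-- If the `3 × 3` transportation polytope `T_{rc}` is not the Birkhoff polytope `B₃`,
then its toric ideal is quadratically generated: the kernel of the monomial map `φ` is
generated by its elements of total degree at most `2`. -/
theorem stmt0 (k : Type*) [Field k]
    (r c : Fin 3 → ℤ) (hr : ∀ i, 0 < r i) (hc : ∀ j, 0 < c j)
    (hs : ∑ i, r i = ∑ j, c j)
    (hB : ¬ ((∀ i, r i = 1) ∧ (∀ j, c j = 1)))
    (L : Set (Matrix (Fin 3) (Fin 3) ℕ))
    (hL : L = {A | (∀ i, (∑ j, (A i j : ℤ)) = r i) ∧ (∀ j, (∑ i, (A i j : ℤ)) = c j)})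
    (φ : MvPolynomial L k →ₐ[k] MvPolynomial (Option (Fin 3 × Fin 3)) k)
    (hφ : φ = MvPolynomial.aeval fun A : L =>
      X none * ∏ i, ∏ j, X (some (i, j)) ^ ((A : Matrix (Fin 3) (Fin 3) ℕ) i j)) :
    RingHom.ker φ = Ideal.span {f | f ∈ RingHom.ker φ ∧ f.totalDegree ≤ 2} := by
  set I := Ideal.span {f | f ∈ RingHom.ker φ ∧ f.totalDegree ≤ 2} with hI
  have hmem : ∀ A : NM, A ∈ L ↔ (∀ i, ((∑ j, A i j : ℕ) : ℤ) = r i) ∧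
      (∀ j, ((∑ i, A i j : ℕ) : ℤ) = c j) := by
    intro A; rw [hL]; simp
  have hSM : ∀ A ∈ L, ∀ B ∈ L, SM A B := by
    intro A hA B hB
    rw [hmem] at hA hB
    exact ⟨fun i => by exact_mod_cast (hA.1 i).trans (hB.1 i).symm,
      fun i => by exact_mod_cast (hA.2 i).trans (hB.2 i).symm⟩
  have hcl : ∀ A ∈ L, ∀ B, SM A B → B ∈ L := by
    intro A hA B h
    rw [hmem] at hA ⊢
    exact ⟨fun i => by rw [← h.1 i]; exact hA.1 i, fun i => by rw [← h.2 i]; exact hA.2 i⟩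
  have hL1 : ∀ A ∈ L, ¬ ((∀ i, ∑ j, A i j = 1) ∧ (∀ j, ∑ i, A i j = 1)) := by
    intro A hA h
    rw [hmem] at hA
    exact hB ⟨fun i => by rw [← hA.1 i, h.1 i]; rfl, fun i => by rw [← hA.2 i, h.2 i]; rfl⟩
  have hphi : ∀ M : Multiset L, φ (mon k M) = monomial (dexp M) 1 := by
    intro M; rw [hφ]; exact phi_mon M
  have hR : Good L (fun M N => mon k M - mon k N ∈ I) :=
    { refl := fun M => by simp
      symm := fun M N h => by rw [← neg_sub]; exact I.neg_mem h
      trans := fun M N P h1 h2 => by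
        have := I.add_mem h1 h2
        rwa [sub_add_sub_cancel] at this
      cons := fun A M N h => by
        rw [mon_cons, mon_cons, ← mul_sub]
        exact I.mul_mem_left _ h
      quad := fun A B C D M h => by
        have h0 : (X A * X B - X C * X D : MvPolynomial L k) ∈ I := by
          refine Ideal.subset_span ⟨?_, ?_⟩
          · have e : dexp (A ::ₘ B ::ₘ (0 : Multiset L)) = dexp (C ::ₘ D ::ₘ 0) := by
              ext o
              rcases o with _ | ⟨i, j⟩
              · simp [dexp]
              · simpa [dexp, en] using h i j
            have h1 := hphi (A ::ₘ B ::ₘ 0)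
            rw [e, ← hphi] at h1
            rw [RingHom.mem_ker, map_sub, sub_eq_zero]
            simpa [mon] using h1
          · have hd : ∀ P Q : L, (X P * X Q : MvPolynomial L k).totalDegree ≤ 2 := fun P Q =>
              (totalDegree_mul _ _).trans (by simp [totalDegree_X])
            exact (totalDegree_sub _ _).trans (max_le (hd _ _) (hd _ _))
        have := I.mul_mem_right (mon k M) h0
        simp only [mon_cons]
        convert this using 1
        ring }
  have hconn : ∀ M N : Multiset L, dexp M = dexp N → mon k M - mon k N ∈ I := by
    intro M N h
    obtain ⟨h1, h2⟩ := dexp_eq h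
    exact connect hSM hcl hL1 hR _ M N rfl h1.symm h2
  apply le_antisymm
  · intro f hf
    classical
    let g : (Option (Fin 3 × Fin 3) →₀ ℕ) → Multiset L := fun d =>
      if h : ∃ M : Multiset L, dexp M = d then h.choose else 0
    have hg : ∀ M : Multiset L, dexp (g (dexp M)) = dexp M := by
      intro M
      have h : ∃ M' : Multiset L, dexp M' = dexp M := ⟨M, rfl⟩
      simp only [g, dif_pos h]
      exact h.choose_spec
    let ψ : MvPolynomial (Option (Fin 3 × Fin 3)) k →ₗ[k] MvPolynomial L k :=
      (basisMonomials _ k).constr k fun d => mon k (g d)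
    have hψ : ∀ d, ψ (monomial d 1) = mon k (g d) := by
      intro d
      have := (basisMonomials (Option (Fin 3 × Fin 3)) k).constr_basis k (fun d => mon k (g d)) d
      simpa [ψ] using this
    have key : ∀ p : MvPolynomial L k, p - ψ (φ p) ∈ I := by
      intro p
      induction p using MvPolynomial.induction_on' with
      | monomial u a =>
        have : (monomial u a : MvPolynomial L k) = a • mon k (Finsupp.toMultiset u) := by
          rw [← monomial_eq_mon, smul_monomial]; simp
        rw [this, map_smul, map_smul, hphi, hψ, ← smul_sub]
        exact Submodule.smul_of_tower_mem I a (hconn _ _ (hg _).symm)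
      | add p q hp hq =>
        have := I.add_mem hp hq
        rw [map_add, map_add]
        convert this using 1
        ring
    have := key f
    rw [RingHom.mem_ker] at hf
    rw [hf] at this
    simpa using this
  · rw [hI, Ideal.span_le]
    exact fun f hf => hf.1
end

section
/- Let k be a field. For each permutation σ ∈ S₃ let A_σ denote the corresponding 3×3 permutation matrix, and let φ : k[x_σ : σ ∈ S₃] → k[t₀, t_{ij} : 1 ≤ i,j ≤ 3] be the k-algebra homomorphism sending x_σ to t₀ · t_{1σ(1)} t_{2σ(2)} t_{3σ(3)}. Then ker φ is the principal ideal generated by the cubic binomial x_{id} x_{(123)} x_{(132)} − x_{(23)} x_{(12)} x_{(13)}, i.e., the product of the variables indexed by the three even permutations minus the product of the variables indexed by the three odd permutations. -/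
open MvPolynomial

namespace Birk

/-- Exponent vector of the image of the variable `x_σ`. -/
noncomputable def ex (σ : Equiv.Perm (Fin 3)) : Option (Fin 3 × Fin 3) →₀ ℕ :=
  Finsupp.single none 1 + ∑ i, Finsupp.single (some (i, σ i)) 1

/-- Exponent vector of the image of a monomial. -/
noncomputable def A (m : Equiv.Perm (Fin 3) →₀ ℕ) : Option (Fin 3 × Fin 3) →₀ ℕ :=
  ∑ σ, m σ • ex σ

lemma A_some (m : Equiv.Perm (Fin 3) →₀ ℕ) (i j : Fin 3) :
    A m (some (i, j)) = ∑ σ, if σ i = j then m σ else 0 := by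
  simp only [A, ex, Finsupp.finsetSum_apply, Finsupp.smul_apply, Finsupp.add_apply]
  refine Finset.sum_congr rfl fun σ _ => ?_
  rw [Finset.sum_eq_single i]
  · simp [Finsupp.single_apply]
  · intro b _ hb
    simp [Finsupp.single_apply, hb]
  · simp

lemma agree : ∀ σ τ : Equiv.Perm (Fin 3), Equiv.Perm.sign σ = 1 → Equiv.Perm.sign τ = -1 →
    ∃ i j, Finset.univ.filter (fun ρ : Equiv.Perm (Fin 3) => ρ i = j) = {σ, τ} := by
  decide

lemma pair_eq {m m' : Equiv.Perm (Fin 3) →₀ ℕ} (h : A m = A m') (σ τ : Equiv.Perm (Fin 3))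
    (hσ : Equiv.Perm.sign σ = 1) (hτ : Equiv.Perm.sign τ = -1) :
    m σ + m τ = m' σ + m' τ := by
  obtain ⟨i, j, hij⟩ := agree σ τ hσ hτ
  have hne : σ ≠ τ := by
    rintro rfl
    rw [hσ] at hτ
    exact absurd hτ (by decide)
  have := DFunLike.congr_fun h (some (i, j))
  rw [A_some, A_some, ← Finset.sum_filter, ← Finset.sum_filter, hij,
    Finset.sum_pair hne, Finset.sum_pair hne] at this
  exact this

variable (k : Type*) [Field k]

/-- Product of the variables whose sign is `s`. -/
noncomputable def P (s : ℤˣ) : MvPolynomial (Equiv.Perm (Fin 3)) k :=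
  ∏ σ ∈ Finset.univ.filter fun σ : Equiv.Perm (Fin 3) => Equiv.Perm.sign σ = s, X σ

lemma mon_eq (m : Equiv.Perm (Fin 3) →₀ ℕ) :
    (monomial m (1 : k)) = ∏ σ, X σ ^ m σ := by
  rw [monomial_eq, Finsupp.prod_fintype _ _ (by simp)]
  simp

lemma factor {m r : Equiv.Perm (Fin 3) →₀ ℕ} {s : ℤˣ} {d : ℕ}
    (h : ∀ σ, m σ = r σ + if Equiv.Perm.sign σ = s then d else 0) :
    monomial m (1 : k) = monomial r 1 * P k s ^ d := by
  rw [mon_eq, mon_eq, P, ← Finset.prod_pow, Finset.prod_filter, ← Finset.prod_mul_distrib]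
  refine Finset.prod_congr rfl fun σ _ => ?_
  rw [h, pow_add]
  split_ifs <;> simp

lemma diff_aux {m m' : Equiv.Perm (Fin 3) →₀ ℕ} (h : A m = A m') (hle : m' 1 ≤ m 1) :
    monomial m (1 : k) - monomial m' 1 ∈ Ideal.span {P k 1 - P k (-1)} := by
  have hs : Equiv.Perm.sign (Equiv.swap (0 : Fin 3) 1) = -1 := by decide
  have hs1 : Equiv.Perm.sign (1 : Equiv.Perm (Fin 3)) = 1 := by decide
  have h0 := pair_eq h 1 (Equiv.swap 0 1) hs1 hs
  have hev : ∀ σ, Equiv.Perm.sign σ = 1 → m σ = m' σ + (m 1 - m' 1) := by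
    intro σ hσ
    have := pair_eq h σ _ hσ hs
    omega
  have hod : ∀ σ, Equiv.Perm.sign σ = -1 → m' σ = m σ + (m 1 - m' 1) := by
    intro σ hσ
    have := pair_eq h 1 σ hs1 hσ
    omega
  have hn : (1 : ℤˣ) ≠ -1 := by decide
  have e1 : monomial m (1 : k) = monomial (m ⊓ m') 1 * P k 1 ^ (m 1 - m' 1) := by
    apply factor
    intro σ
    rcases Int.units_eq_one_or (Equiv.Perm.sign σ) with hσ | hσ
    · have := hev σ hσ
      simp only [Finsupp.inf_apply, hσ, if_true]
      omega
    · have := hod σ hσ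
      simp only [Finsupp.inf_apply, hσ, hn.symm, if_false]
      omega
  have e2 : monomial m' (1 : k) = monomial (m ⊓ m') 1 * P k (-1) ^ (m 1 - m' 1) := by
    apply factor
    intro σ
    rcases Int.units_eq_one_or (Equiv.Perm.sign σ) with hσ | hσ
    · have := hev σ hσ
      simp only [Finsupp.inf_apply, hσ, hn, if_false]
      omega
    · have := hod σ hσ
      simp only [Finsupp.inf_apply, hσ, if_true]
      omega
  rw [e1, e2, ← mul_sub]
  exact Ideal.mul_mem_left _ _ (Ideal.mem_span_singleton.2 (sub_dvd_pow_sub_pow _ _ _))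

lemma diff_mem {m m' : Equiv.Perm (Fin 3) →₀ ℕ} (h : A m = A m') :
    monomial m (1 : k) - monomial m' 1 ∈ Ideal.span {P k 1 - P k (-1)} := by
  rcases le_total (m' 1) (m 1) with hle | hle
  · exact diff_aux k h hle
  · rw [← neg_sub (monomial m' (1 : k))]
    exact neg_mem (diff_aux k h.symm hle)

lemma img_X (σ : Equiv.Perm (Fin 3)) :
    (X none * ∏ i, X (some (i, σ i)) : MvPolynomial (Option (Fin 3 × Fin 3)) k)
      = monomial (ex σ) 1 := by
  simp only [X, ex, Fin.prod_univ_three, Fin.sum_univ_three, monomial_mul, mul_one]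

lemma img_mon (m : Equiv.Perm (Fin 3) →₀ ℕ) :
    (aeval fun σ : Equiv.Perm (Fin 3) =>
      (X none * ∏ i, X (some (i, σ i)) : MvPolynomial (Option (Fin 3 × Fin 3)) k))
      (monomial m (1 : k)) = monomial (A m) 1 := by
  rw [mon_eq, map_prod, A, monomial_sum_one]
  refine Finset.prod_congr rfl fun σ _ => ?_
  rw [map_pow, aeval_X, img_X, monomial_pow, one_pow]

end Birk

/-- The toric ideal of the Birkhoff polytope `B₃` is the principal ideal generated by
the cubic binomial: product of the variables indexed by the even permutations minus
the product of the variables indexed by the odd permutations. -/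
theorem stmt1 (k : Type*) [Field k]
    (φ : MvPolynomial (Equiv.Perm (Fin 3)) k →ₐ[k]
      MvPolynomial (Option (Fin 3 × Fin 3)) k)
    (hφ : φ = MvPolynomial.aeval fun σ : Equiv.Perm (Fin 3) =>
      X none * ∏ i, X (some (i, σ i))) :
    RingHom.ker φ = Ideal.span
      {(∏ σ ∈ Finset.univ.filter fun σ : Equiv.Perm (Fin 3) => Equiv.Perm.sign σ = 1,
          (X σ : MvPolynomial (Equiv.Perm (Fin 3)) k)) -
        ∏ σ ∈ Finset.univ.filter fun σ : Equiv.Perm (Fin 3) => Equiv.Perm.sign σ = -1,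
          X σ} := by
  change RingHom.ker φ = Ideal.span {Birk.P k 1 - Birk.P k (-1)}
  have hmon : ∀ m, φ (monomial m (1 : k)) = monomial (Birk.A m) 1 := by
    intro m
    rw [hφ]
    exact Birk.img_mon k m
  apply le_antisymm
  · let L : MvPolynomial (Option (Fin 3 × Fin 3)) k →ₗ[k] MvPolynomial (Equiv.Perm (Fin 3)) k :=
      (basisMonomials _ k).constr k fun n => monomial (Function.invFun Birk.A n) (1 : k)
    have hL : ∀ n, L (monomial n 1) = monomial (Function.invFun Birk.A n) (1 : k) := by
      intro n
      have := (basisMonomials (Option (Fin 3 × Fin 3)) k).constr_basis k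
        (fun n => monomial (Function.invFun Birk.A n) (1 : k)) n
      rwa [coe_basisMonomials] at this
    have hone : ∀ m a, monomial m a - L (φ (monomial m a)) ∈
        Ideal.span {Birk.P k 1 - Birk.P k (-1)} := by
      intro m a
      have e : monomial m a = a • monomial m (1 : k) := by
        rw [smul_monomial, smul_eq_mul, mul_one]
      rw [e, map_smul, map_smul, hmon, hL, ← smul_sub, smul_eq_C_mul]
      apply Ideal.mul_mem_left
      apply Birk.diff_mem
      exact (Function.invFun_eq (f := Birk.A) ⟨m, rfl⟩).symm
    have key : ∀ f, f - L (φ f) ∈ Ideal.span {Birk.P k 1 - Birk.P k (-1)} := by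
      intro f
      induction f using MvPolynomial.monomial_add_induction_on with
      | C a =>
        have := hone 0 a
        simpa using this
      | monomial_add m a f _ _ ih =>
        have := add_mem (hone m a) ih
        rw [map_add, map_add]
        convert this using 1
        ring
    intro f hf
    have := key f
    rwa [(RingHom.mem_ker).1 hf, map_zero, sub_zero] at this
  · rw [Ideal.span_singleton_le_iff_mem, RingHom.mem_ker, map_sub, sub_eq_zero]
    have hP : ∀ s, φ (Birk.P k s) = ∏ σ ∈ Finset.univ.filter
        (fun σ : Equiv.Perm (Fin 3) => Equiv.Perm.sign σ = s),
          (X none * ∏ i, X (some (i, σ i))) := by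
      intro s
      simp only [Birk.P, map_prod, hφ, aeval_X]
    rw [hP, hP, Finset.prod_mul_distrib, Finset.prod_mul_distrib, Finset.prod_const,
      Finset.prod_const, Finset.prod_comm,
      Finset.prod_comm (s := Finset.univ.filter
        (fun σ : Equiv.Perm (Fin 3) => Equiv.Perm.sign σ = -1))]
    have hc : ∀ s : ℤˣ, (Finset.univ.filter
        (fun σ : Equiv.Perm (Fin 3) => Equiv.Perm.sign σ = s)).card = 3 := by decide
    have hb : ∀ (s : ℤˣ) (i : Fin 3), (Finset.univ.filter
        (fun σ : Equiv.Perm (Fin 3) => Equiv.Perm.sign σ = s)).image (fun σ => σ i)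
          = Finset.univ := by decide
    have hi : ∀ (s : ℤˣ) (i : Fin 3), ∏ σ ∈ Finset.univ.filter
        (fun σ : Equiv.Perm (Fin 3) => Equiv.Perm.sign σ = s),
          (X (some (i, σ i)) : MvPolynomial (Option (Fin 3 × Fin 3)) k)
          = ∏ j, X (some (i, j)) := by
      intro s i
      rw [← hb s i, Finset.prod_image]
      apply Finset.card_image_iff.1
      rw [hb, hc]
      rfl
    simp only [hc, hi]
end

section
/- Let k be a field and let φ : k[x_σ : σ ∈ S₃] → k[t₀, t_{ij} : 1 ≤ i,j ≤ 3] be the k-algebra homomorphism sending x_σ to t₀ · t_{1σ(1)} t_{2σ(2)} t_{3σ(3)}. Then ker φ is nonzero, but every element of ker φ of total degree at most 2 is zero; in particular, the toric ideal of the Birkhoff polytope B₃ is not generated by its elements of degree at most 2 (it is not quadratically generated). -/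
open MvPolynomial

/-- The exponent vector of the image of `x_σ`. -/
noncomputable def expo (σ : Equiv.Perm (Fin 3)) : Option (Fin 3 × Fin 3) →₀ ℕ :=
  Finsupp.single none 1 + ∑ i, Finsupp.single (some (i, σ i)) 1

/-- The exponent vector of the image of a monomial. -/
noncomputable def expoMap (m : Equiv.Perm (Fin 3) →₀ ℕ) : Option (Fin 3 × Fin 3) →₀ ℕ :=
  ∑ σ, m σ • expo σ

lemma univ_perm : (Finset.univ : Finset (Equiv.Perm (Fin 3))) =
    {1, finRotate 3, (finRotate 3)⁻¹, Equiv.swap 0 1, Equiv.swap 0 2, Equiv.swap 1 2} := by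
  decide

lemma sum_perm {M : Type*} [AddCommMonoid M] (g : Equiv.Perm (Fin 3) → M) :
    ∑ σ, g σ = g 1 + (g (finRotate 3) + (g (finRotate 3)⁻¹ + (g (Equiv.swap 0 1) +
      (g (Equiv.swap 0 2) + g (Equiv.swap 1 2))))) := by
  rw [univ_perm, Finset.sum_insert (by decide), Finset.sum_insert (by decide),
    Finset.sum_insert (by decide), Finset.sum_insert (by decide), Finset.sum_insert (by decide),
    Finset.sum_singleton]

lemma expo_apply (σ : Equiv.Perm (Fin 3)) (i j : Fin 3) :
    expo σ (some (i, j)) = if σ i = j then 1 else 0 := by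
  simp only [expo, Finsupp.add_apply, Finsupp.finset_sum_apply, Finsupp.single_apply]
  simp only [reduceCtorEq, if_false, zero_add, Option.some.injEq, Prod.mk.injEq]
  rw [Finset.sum_eq_single i]
  · simp
  · intro b _ hb; simp [hb]
  · simp

lemma expoMap_apply (m : Equiv.Perm (Fin 3) →₀ ℕ) (i j : Fin 3) :
    expoMap m (some (i, j)) = ∑ σ, if σ i = j then m σ else 0 := by
  simp [expoMap, Finsupp.finset_sum_apply, expo_apply]

lemma expoMap_inj (m n : Equiv.Perm (Fin 3) →₀ ℕ) (hm : ∑ σ, m σ ≤ 2) (hn : ∑ σ, n σ ≤ 2)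
    (h : expoMap m = expoMap n) : m = n := by
  have key : ∀ i j : Fin 3, (∑ σ : Equiv.Perm (Fin 3), if σ i = j then m σ else 0) =
      ∑ σ : Equiv.Perm (Fin 3), if σ i = j then n σ else 0 := by
    intro i j
    rw [← expoMap_apply, ← expoMap_apply, h]
  simp only [sum_perm] at key hm hn
  have h00 := key 0 0
  have h01 := key 0 1
  have h02 := key 0 2
  have h10 := key 1 0
  have h11 := key 1 1
  have h12 := key 1 2
  have h20 := key 2 0
  have h21 := key 2 1
  have h22 := key 2 2
  simp +decide only [if_true, if_false] at h00 h01 h02 h10 h11 h12 h20 h21 h22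
  ext σ
  have hσ : σ ∈ (Finset.univ : Finset (Equiv.Perm (Fin 3))) := Finset.mem_univ σ
  rw [univ_perm] at hσ
  simp only [Finset.mem_insert, Finset.mem_singleton] at hσ
  rcases hσ with h | h | h | h | h | h <;> rw [h] <;> omega

lemma map_X (k : Type*) [Field k] (σ : Equiv.Perm (Fin 3)) :
    (X none * ∏ i, X (some (i, σ i)) : MvPolynomial (Option (Fin 3 × Fin 3)) k) =
      monomial (expo σ) 1 := by
  simp [expo, Fin.prod_univ_three, Fin.sum_univ_three, X, monomial_mul]

lemma map_monomial (k : Type*) [Field k] (m : Equiv.Perm (Fin 3) →₀ ℕ) (c : k) :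
    MvPolynomial.aeval (fun σ : Equiv.Perm (Fin 3) =>
      (X none * ∏ i, X (some (i, σ i)) : MvPolynomial (Option (Fin 3 × Fin 3)) k))
      (monomial m c) = monomial (expoMap m) c := by
  simp only [map_X]
  rw [aeval_monomial, Finsupp.prod_fintype _ _ (by simp)]
  simp only [monomial_pow, one_pow]
  rw [← monomial_sum_one, algebraMap_eq, C_mul_monomial, mul_one]
  rfl

theorem stmt2 (k : Type*) [Field k]
    (φ : MvPolynomial (Equiv.Perm (Fin 3)) k →ₐ[k]
      MvPolynomial (Option (Fin 3 × Fin 3)) k)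
    (hφ : φ = MvPolynomial.aeval fun σ : Equiv.Perm (Fin 3) =>
      X none * ∏ i, X (some (i, σ i))) :
    RingHom.ker φ ≠ ⊥ ∧
    (∀ f ∈ RingHom.ker φ, f.totalDegree ≤ 2 → f = 0) ∧
    RingHom.ker φ ≠ Ideal.span {f | f ∈ RingHom.ker φ ∧ f.totalDegree ≤ 2} := by
  have h1 : RingHom.ker φ ≠ ⊥ := by
    intro h
    let g : MvPolynomial (Equiv.Perm (Fin 3)) k :=
      X 1 * X (finRotate 3) * X (finRotate 3)⁻¹ -
        X (Equiv.swap 0 1) * X (Equiv.swap 0 2) * X (Equiv.swap 1 2)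
    have hg : g ∈ RingHom.ker φ := by
      rw [RingHom.mem_ker, hφ]
      simp only [g, map_sub, map_mul, aeval_X, Fin.prod_univ_three]
      rw [show finRotate 3 0 = 1 by decide, show finRotate 3 1 = 2 by decide,
        show finRotate 3 2 = 0 by decide, show (finRotate 3)⁻¹ 0 = 2 by decide,
        show (finRotate 3)⁻¹ 1 = 0 by decide, show (finRotate 3)⁻¹ 2 = 1 by decide,
        show (Equiv.swap 0 1 : Equiv.Perm (Fin 3)) 0 = 1 by decide,
        show (Equiv.swap 0 1 : Equiv.Perm (Fin 3)) 1 = 0 by decide,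
        show (Equiv.swap 0 1 : Equiv.Perm (Fin 3)) 2 = 2 by decide,
        show (Equiv.swap 0 2 : Equiv.Perm (Fin 3)) 0 = 2 by decide,
        show (Equiv.swap 0 2 : Equiv.Perm (Fin 3)) 1 = 1 by decide,
        show (Equiv.swap 0 2 : Equiv.Perm (Fin 3)) 2 = 0 by decide,
        show (Equiv.swap 1 2 : Equiv.Perm (Fin 3)) 0 = 0 by decide,
        show (Equiv.swap 1 2 : Equiv.Perm (Fin 3)) 1 = 2 by decide,
        show (Equiv.swap 1 2 : Equiv.Perm (Fin 3)) 2 = 1 by decide]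
      simp only [Equiv.Perm.one_apply]
      ring
    rw [h, Ideal.mem_bot] at hg
    have h2 := congrArg (eval fun σ : Equiv.Perm (Fin 3) =>
      if Equiv.Perm.sign σ = 1 then (1 : k) else 0) hg
    simp only [g, map_sub, map_mul, eval_X, map_zero] at h2
    simp +decide at h2
  have h2 : ∀ f ∈ RingHom.ker φ, f.totalDegree ≤ 2 → f = 0 := by
    intro f hf hd
    have hdeg : ∀ m ∈ f.support, ∑ σ, m σ ≤ 2 := by
      intro m hm
      have := (le_totalDegree hm).trans hd
      rwa [Finsupp.sum_fintype _ _ (by simp)] at this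
    rw [RingHom.mem_ker, hφ, f.as_sum, map_sum] at hf
    simp only [map_monomial] at hf
    by_contra hne
    obtain ⟨m, hm⟩ := Finset.nonempty_of_ne_empty (mt support_eq_empty.1 hne)
    have hc := congrArg (coeff (expoMap m)) hf
    rw [coeff_sum, Finset.sum_eq_single m] at hc
    · simp only [coeff_monomial, if_true, coeff_zero] at hc
      exact (mem_support_iff.1 hm) hc
    · intro n hn hnm
      rw [coeff_monomial, if_neg]
      exact fun he => hnm (expoMap_inj n m (hdeg n hn) (hdeg m hm) he)
    · exact fun h => absurd hm h
  refine ⟨h1, h2, fun h => h1 ?_⟩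
  rw [h, Ideal.span_eq_bot]
  exact fun f hf => h2 f hf.1 hf.2
end

section
/- Let r ∈ ℝ^m and c ∈ ℝ^n be vectors of positive reals with Σ_i r_i = Σ_j c_j. Then the transportation polytope T_{rc} ⊂ ℝ^{m×n} has affine dimension exactly (m−1)(n−1); that is, the dimension (finrank) of the vector span of the set of differences of points of T_{rc} equals (m−1)(n−1). -/
/-- Matrices with zero row and column sums. -/
def zeroMargins (m n : ℕ) : Submodule ℝ (Matrix (Fin m) (Fin n) ℝ) where
  carrier := {A | (∀ i, ∑ j, A i j = 0) ∧ (∀ j, ∑ i, A i j = 0)}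
  zero_mem' := by simp
  add_mem' := by
    rintro a b ⟨h1, h2⟩ ⟨h3, h4⟩
    constructor <;> intro i <;> simp [Finset.sum_add_distrib, *]
  smul_mem' := by
    rintro t a ⟨h1, h2⟩
    constructor <;> intro i <;> simp [← Finset.mul_sum, *]

/-- Deleting the first row and column. -/
def zeroMarginsRestrict (p q : ℕ) :
    zeroMargins (p + 1) (q + 1) →ₗ[ℝ] (Matrix (Fin p) (Fin q) ℝ) where
  toFun A := fun i j => A.1 i.succ j.succ
  map_add' _ _ := rfl
  map_smul' _ _ := rfl

theorem zeroMarginsRestrict_bijective (p q : ℕ) :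
    Function.Bijective (zeroMarginsRestrict p q) := by
  constructor
  · rw [injective_iff_map_eq_zero]
    rintro ⟨A, h1, h2⟩ h
    have hA : ∀ i j, A (Fin.succ i) (Fin.succ j) = 0 := fun i j => congrFun (congrFun h i) j
    have hrow : ∀ i, A (Fin.succ i) 0 = 0 := by
      intro i
      have := h1 i.succ
      rw [Fin.sum_univ_succ] at this
      simpa [hA] using this
    have hcol : ∀ j, A 0 j = 0 := by
      intro j
      have := h2 j
      rw [Fin.sum_univ_succ] at this
      refine Fin.cases ?_ (fun j => ?_) j <;> clear this
      · have := h2 0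
        rw [Fin.sum_univ_succ] at this
        simpa [hrow] using this
      · have := h2 j.succ
        rw [Fin.sum_univ_succ] at this
        simpa [hA] using this
    apply Subtype.ext
    ext i j
    refine Fin.cases (hcol j) (fun i => ?_) i
    exact Fin.cases (hrow i) (fun j => hA i j) j
  · intro B
    let R : Fin p → Fin (q + 1) → ℝ := fun i => Fin.cons (-∑ j, B i j) (B i)
    have hR : ∀ i, ∑ j, R i j = 0 := by
      intro i
      simp [R, Fin.sum_univ_succ]
    let F : Fin (p + 1) → Fin (q + 1) → ℝ := Fin.cons (fun j => -∑ i, R i j) R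
    have h0 : ∀ j, F 0 j = -∑ i, R i j := fun j => rfl
    have hS : ∀ i j, F (Fin.succ i) j = R i j := fun i j => rfl
    refine ⟨⟨F, ?_, ?_⟩, ?_⟩
    · intro i
      refine Fin.cases ?_ (fun i => ?_) i
      · simp only [h0, Finset.sum_neg_distrib]
        rw [Finset.sum_comm]
        simp [hR]
      · simp only [hS, hR]
    · intro j
      rw [Fin.sum_univ_succ]
      simp [h0, hS]
    · rfl

theorem vectorSpan_transport (m n : ℕ) (r : Fin m → ℝ) (c : Fin n → ℝ)
    (hr : ∀ i, 0 < r i) (hc : ∀ j, 0 < c j) (hs : ∑ i, r i = ∑ j, c j)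
    (hpos : 0 < ∑ i, r i) :
    vectorSpan ℝ {A : Matrix (Fin m) (Fin n) ℝ | (∀ i j, 0 ≤ A i j) ∧ (∀ i, ∑ j, A i j = r i) ∧
      (∀ j, ∑ i, A i j = c j)} = zeroMargins m n := by
  apply le_antisymm
  · rw [vectorSpan_def, Submodule.span_le]
    rintro _ ⟨A, ⟨-, h1, h2⟩, B, ⟨-, h3, h4⟩, rfl⟩
    constructor <;> intro i <;> simp [Finset.sum_sub_distrib, *]
  · rintro B ⟨h1, h2⟩
    let A : Matrix (Fin m) (Fin n) ℝ := fun i j => r i * c j / ∑ i, r i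
    have hA : ∀ i j, 0 < A i j := fun i j => div_pos (mul_pos (hr i) (hc j)) hpos
    have hA1 : ∀ i, ∑ j, A i j = r i := by
      intro i
      simp only [A]
      rw [← Finset.sum_div, ← Finset.mul_sum, ← hs]
      field_simp
    have hA2 : ∀ j, ∑ i, A i j = c j := by
      intro j
      simp only [A]
      rw [← Finset.sum_div, ← Finset.sum_mul]
      field_simp
    have hev : ∀ᶠ t : ℝ in nhdsWithin 0 (Set.Ioi 0), ∀ i j, 0 < A i j + t * B i j := by
      rw [Filter.eventually_all]
      intro i
      rw [Filter.eventually_all]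
      intro j
      apply Filter.Eventually.filter_mono nhdsWithin_le_nhds
      have hcont : Continuous fun t : ℝ => A i j + t * B i j := by fun_prop
      exact hcont.continuousAt.eventually_const_lt (by simpa using hA i j)
    obtain ⟨t, ht, ht0⟩ := (hev.and self_mem_nhdsWithin).exists
    have ht0 : 0 < t := ht0
    have hmem : (A + t • B) -ᵥ A ∈ vectorSpan ℝ {A : Matrix (Fin m) (Fin n) ℝ |
        (∀ i j, 0 ≤ A i j) ∧ (∀ i, ∑ j, A i j = r i) ∧ (∀ j, ∑ i, A i j = c j)} := by
      apply vsub_mem_vectorSpan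
      · refine ⟨fun i j => (ht i j).le, fun i => ?_, fun j => ?_⟩
        · simp [Finset.sum_add_distrib, ← Finset.mul_sum, hA1, h1]
        · simp [Finset.sum_add_distrib, ← Finset.mul_sum, hA2, h2]
      · exact ⟨fun i j => (hA i j).le, hA1, hA2⟩
    rw [vsub_eq_sub, add_sub_cancel_left] at hmem
    exact (Submodule.smul_mem_iff _ ht0.ne').1 hmem

/-- The transportation polytope `T_{rc} ⊂ ℝ^{m×n}` for positive real marginals with
equal sums has affine dimension exactly `(m-1)(n-1)`. -/
theorem stmt5 (m n : ℕ) (r : Fin m → ℝ) (c : Fin n → ℝ)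
    (hr : ∀ i, 0 < r i) (hc : ∀ j, 0 < c j) (hs : ∑ i, r i = ∑ j, c j)
    (T : Set (Matrix (Fin m) (Fin n) ℝ))
    (hT : T = {A | (∀ i j, 0 ≤ A i j) ∧ (∀ i, ∑ j, A i j = r i) ∧
      (∀ j, ∑ i, A i j = c j)}) :
    Module.finrank ℝ (vectorSpan ℝ T) = (m - 1) * (n - 1) := by
  rcases m with _ | p
  · have : Subsingleton (vectorSpan ℝ T) := ⟨fun a b => Subtype.ext (Subsingleton.elim _ _)⟩
    rw [Module.finrank_zero_of_subsingleton]
    simp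
  have hpos : 0 < ∑ i, r i := Finset.sum_pos (fun i _ => hr i) Finset.univ_nonempty
  rcases n with _ | q
  · simp at hs
    linarith
  subst hT
  rw [vectorSpan_transport _ _ r c hr hc hs hpos,
    (LinearEquiv.ofBijective _ (zeroMarginsRestrict_bijective p q)).finrank_eq]
  simp [Module.finrank_matrix]
end

section
/- Let r ∈ ℝ^m and c ∈ ℝ^n be vectors of positive reals with Σ_i r_i = Σ_j c_j, and let A ∈ T_{rc}. If A has at least (m−1)(n−1)+1 zero entries, then there exist nonempty proper subsets I ⊊ {1,…,m} and J ⊊ {1,…,n} such that Σ_{i ∈ I} r_i = Σ_{j ∈ J} c_j and A_{ij} = 0 whenever (i,j) ∈ I × Jᶜ or (i,j) ∈ Iᶜ × J. -/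
/-- If a point `A` of the transportation polytope `T_{rc}` has at least
`(m-1)(n-1)+1` zero entries, then there are nonempty proper index sets `I`, `J`
with `∑_{i ∈ I} r_i = ∑_{j ∈ J} c_j` and `A` vanishing on `I × Jᶜ` and `Iᶜ × J`. -/
theorem stmt9 (m n : ℕ) (r : Fin m → ℝ) (c : Fin n → ℝ)
    (hr : ∀ i, 0 < r i) (hc : ∀ j, 0 < c j) (hs : ∑ i, r i = ∑ j, c j)
    (A : Matrix (Fin m) (Fin n) ℝ)
    (hA0 : ∀ i j, 0 ≤ A i j) (hAr : ∀ i, ∑ j, A i j = r i)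
    (hAc : ∀ j, ∑ i, A i j = c j)
    (hz : (m - 1) * (n - 1) + 1 ≤
      (Finset.univ.filter fun p : Fin m × Fin n => A p.1 p.2 = 0).card) :
    ∃ (I : Finset (Fin m)) (J : Finset (Fin n)),
      I.Nonempty ∧ I ≠ Finset.univ ∧ J.Nonempty ∧ J ≠ Finset.univ ∧
      (∑ i ∈ I, r i) = (∑ j ∈ J, c j) ∧
      (∀ i j, (i ∈ I ∧ j ∉ J) ∨ (i ∉ I ∧ j ∈ J) → A i j = 0) := by
  classical
  have key : ∀ (P : Fin m → Prop) (Q : Fin n → Prop) [DecidablePred P] [DecidablePred Q],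
      (∀ i j, (P i ∧ ¬ Q j) ∨ (¬ P i ∧ Q j) → A i j = 0) →
      ∑ i ∈ Finset.univ.filter P, r i = ∑ j ∈ Finset.univ.filter Q, c j := by
    intro P Q _ _ h
    have e1 : ∀ i, (if P i then r i else 0) = ∑ j, if P i then A i j else 0 := by
      intro i
      rw [← hAr i]
      split_ifs <;> simp
    have e2 : ∀ j, (if Q j then c j else 0) = ∑ i, if Q j then A i j else 0 := by
      intro j
      rw [← hAc j]
      split_ifs <;> simp
    rw [Finset.sum_filter, Finset.sum_filter, Finset.sum_congr rfl fun i _ => e1 i,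
      Finset.sum_congr rfl fun j _ => e2 j, Finset.sum_comm]
    refine Finset.sum_congr rfl fun j _ => Finset.sum_congr rfl fun i _ => ?_
    have := h i j
    split_ifs <;> grind
  have hrow : ∀ i, ∃ j, A i j ≠ 0 := by
    intro i
    by_contra! h
    have := hAr i
    simp only [h, Finset.sum_const_zero] at this
    exact absurd this (hr i).ne
  have hcol : ∀ j, ∃ i, A i j ≠ 0 := by
    intro j
    by_contra! h
    have := hAc j
    simp only [h, Finset.sum_const_zero] at this
    exact absurd this (hc j).ne
  let G : SimpleGraph (Fin m ⊕ Fin n) :=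
    SimpleGraph.fromRel fun x y => ∃ i j, x = Sum.inl i ∧ y = Sum.inr j ∧ A i j ≠ 0
  have hadj : ∀ i j, A i j ≠ 0 → G.Adj (Sum.inl i) (Sum.inr j) := by
    intro i j h
    rw [SimpleGraph.fromRel_adj]
    exact ⟨by simp, Or.inl ⟨i, j, rfl, rfl, h⟩⟩
  have hm : 0 < m := by
    rcases Nat.eq_zero_or_pos m with h | h
    · subst h
      simp at hz
    · exact h
  have hn : 0 < n := by
    rcases Nat.eq_zero_or_pos n with h | h
    · subst h
      simp at hz
    · exact h
  have hedge : Nat.card G.edgeSet ≤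
      (Finset.univ.filter fun p : Fin m × Fin n => ¬ A p.1 p.2 = 0).card := by
    rw [Nat.card_coe_set_eq]
    have hsub : G.edgeSet ⊆
        (((Finset.univ.filter fun p : Fin m × Fin n => ¬ A p.1 p.2 = 0).image
          fun p => s(Sum.inl p.1, Sum.inr p.2) : Finset (Sym2 (Fin m ⊕ Fin n))) :
            Set (Sym2 (Fin m ⊕ Fin n))) := by
      intro e he
      induction e using Sym2.ind with
      | _ x y =>
        rw [SimpleGraph.mem_edgeSet, SimpleGraph.fromRel_adj] at he
        simp only [Finset.coe_image, Set.mem_image, Finset.mem_coe, Finset.mem_filter,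
          Finset.mem_univ, true_and]
        rcases he.2 with ⟨i, j, rfl, rfl, h⟩ | ⟨i, j, rfl, rfl, h⟩
        · exact ⟨(i, j), h, rfl⟩
        · exact ⟨(i, j), h, Sym2.eq_swap⟩
    refine (Set.ncard_le_ncard hsub (Finset.finite_toSet _)).trans ?_
    rw [Set.ncard_coe_finset]
    exact Finset.card_image_le
  have hnc : ¬ G.Connected := by
    intro h
    have h1 := h.card_vert_le_card_edgeSet_add_one
    have h2 := Finset.card_filter_add_card_filter_not (s := Finset.univ)
      (fun p : Fin m × Fin n => A p.1 p.2 = 0)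
    simp only [Nat.card_eq_fintype_card, Fintype.card_sum, Fintype.card_fin, Finset.card_univ,
      Fintype.card_prod] at h1 h2 hedge
    obtain ⟨a, rfl⟩ : ∃ a, m = a + 1 := ⟨m - 1, by omega⟩
    obtain ⟨b, rfl⟩ : ∃ b, n = b + 1 := ⟨n - 1, by omega⟩
    simp only [Nat.add_sub_cancel] at hz
    nlinarith
  have hnp : ¬ G.Preconnected := by
    intro h
    have : Nonempty (Fin m ⊕ Fin n) := ⟨Sum.inl ⟨0, hm⟩⟩
    exact hnc ⟨h⟩
  obtain ⟨u, v, huv⟩ : ∃ u v, ¬ G.Reachable u v := by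
    by_contra! h
    exact hnp h
  have hcl : ∀ i j, A i j ≠ 0 → (G.Reachable u (Sum.inl i) ↔ G.Reachable u (Sum.inr j)) := by
    intro i j h
    exact ⟨fun k => k.trans (hadj i j h).reachable, fun k => k.trans (hadj i j h).symm.reachable⟩
  have hzero : ∀ i j, (G.Reachable u (Sum.inl i) ∧ ¬ G.Reachable u (Sum.inr j)) ∨
      (¬ G.Reachable u (Sum.inl i) ∧ G.Reachable u (Sum.inr j)) → A i j = 0 := by
    intro i j h
    by_contra h0
    have := hcl i j h0
    tauto
  have hu : G.Reachable u u := SimpleGraph.Reachable.refl u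
  refine ⟨Finset.univ.filter fun i => G.Reachable u (Sum.inl i),
    Finset.univ.filter fun j => G.Reachable u (Sum.inr j), ?_, ?_, ?_, ?_, ?_, ?_⟩
  · rcases u with i | j
    · exact ⟨i, by simp⟩
    · obtain ⟨i, hi⟩ := hcol j
      exact ⟨i, by simpa using (hcl i j hi).2 hu⟩
  · intro h
    simp only [Finset.filter_eq_self, Finset.mem_univ, true_imp_iff] at h
    rcases v with i | j
    · exact huv (h i)
    · obtain ⟨i, hi⟩ := hcol j
      exact huv ((hcl i j hi).1 (h i))
  · rcases u with i | j
    · obtain ⟨j, hj⟩ := hrow i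
      exact ⟨j, by simpa using (hcl i j hj).1 hu⟩
    · exact ⟨j, by simp⟩
  · intro h
    simp only [Finset.filter_eq_self, Finset.mem_univ, true_imp_iff] at h
    rcases v with i | j
    · obtain ⟨j, hj⟩ := hrow i
      exact huv ((hcl i j hj).2 (h j))
    · exact huv (h j)
  · exact key _ _ hzero
  · intro i j h
    simp only [Finset.mem_filter, Finset.mem_univ, true_and] at h
    exact hzero i j h
end

section
/- Let r ∈ ℝ^m and c ∈ ℝ^n be vectors of positive reals with Σ_i r_i = Σ_j c_j. Suppose there exist nonempty proper subsets I ⊊ {1,…,m} and J ⊊ {1,…,n} with Σ_{i ∈ I} r_i = Σ_{j ∈ J} c_j. Then the transportation polytope T_{rc} has an extreme point with at least (m−1)(n−1)+1 zero entries. (Hence T_{rc} is not a simple polytope: it has a vertex lying on more than dim T_{rc} = (m−1)(n−1) facets.) -/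
def TP {α β : Type} [DecidableEq α] [DecidableEq β] (R : Finset α) (C : Finset β)
    (r : α → ℝ) (c : β → ℝ) : Prop :=
  ∃ A : α → β → ℝ, (∀ i ∈ R, ∀ j ∈ C, 0 ≤ A i j) ∧ (∀ i ∈ R, ∑ j ∈ C, A i j = r i) ∧
    (∀ j ∈ C, ∑ i ∈ R, A i j = c j) ∧
    (∃ S : Finset (α × β), S.card + 1 ≤ R.card + C.card ∧
      ∀ i ∈ R, ∀ j ∈ C, A i j ≠ 0 → (i, j) ∈ S) ∧
    ∀ D : α → β → ℝ, (∀ i ∈ R, ∀ j ∈ C, A i j = 0 → D i j = 0) →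
      (∀ i ∈ R, ∑ j ∈ C, D i j = 0) → (∀ j ∈ C, ∑ i ∈ R, D i j = 0) →
      ∀ i ∈ R, ∀ j ∈ C, D i j = 0

theorem TP.symm {α β : Type} [DecidableEq α] [DecidableEq β] {R : Finset α} {C : Finset β}
    {r : α → ℝ} {c : β → ℝ} (h : TP R C r c) : TP C R c r := by
  obtain ⟨A, h1, h2, h3, ⟨S, h4, h5⟩, h6⟩ := h
  refine ⟨fun j i => A i j, fun i hi j hj => h1 j hj i hi, h3, h2,
    ⟨S.map (Equiv.prodComm α β).toEmbedding, ?_, ?_⟩, ?_⟩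
  · rw [Finset.card_map]; omega
  · intro i hi j hj h
    simpa using h5 j hj i hi h
  · intro D d1 d2 d3 i hi j hj
    exact h6 (fun i j => D j i) (fun i hi j hj => d1 j hj i hi) d3 d2 j hj i hi

theorem TP.base {α β : Type} [DecidableEq α] [DecidableEq β] (i0 : α) {C : Finset β}
    {r : α → ℝ} {c : β → ℝ} (hc : ∀ j ∈ C, 0 ≤ c j) (h : r i0 = ∑ j ∈ C, c j) :
    TP {i0} C r c := by
  refine ⟨fun _ j => c j, fun i _ => hc, ?_, ?_, ⟨{i0} ×ˢ C, ?_, ?_⟩, ?_⟩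
  · intro i hi
    rw [Finset.mem_singleton.1 hi, h]
  · simp
  · simp [add_comm]
  · intro i hi j hj _
    exact Finset.mem_product.2 ⟨hi, hj⟩
  · intro D _ _ d i hi j hj
    rw [Finset.mem_singleton.1 hi]
    simpa using d j hj

theorem TP.step {α β : Type} [DecidableEq α] [DecidableEq β] {i0 : α} {j0 : β} {R : Finset α}
    {C : Finset β} {r : α → ℝ} {c : β → ℝ} (hi0 : i0 ∉ R) (hj0 : j0 ∈ C) (hr : 0 ≤ r i0)
    (h : TP R C r (fun j => c j - if j = j0 then r i0 else 0)) :
    TP (insert i0 R) C r c := by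
  obtain ⟨A, h1, h2, h3, ⟨S, h4, h5⟩, h6⟩ := h
  have hne : ∀ i ∈ R, i ≠ i0 := fun i hi e => hi0 (e ▸ hi)
  refine ⟨fun i j => if i = i0 then (if j = j0 then r i0 else 0) else A i j, ?_, ?_, ?_,
    ⟨insert (i0, j0) S, ?_, ?_⟩, ?_⟩
  · intro i hi j hj
    rcases Finset.mem_insert.1 hi with rfl | hi
    · simp only [if_true]; split_ifs <;> simp [hr]
    · simpa [hne i hi] using h1 i hi j hj
  · intro i hi
    rcases Finset.mem_insert.1 hi with rfl | hi
    · simp [hj0]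
    · simpa [hne i hi] using h2 i hi
  · intro j hj
    rw [Finset.sum_insert hi0, Finset.sum_congr rfl (g := fun i => A i j)
      (fun i hi => by simp [hne i hi]), h3 j hj]
    simp
  · rw [Finset.card_insert_of_notMem hi0]
    have := Finset.card_insert_le (i0, j0) S
    omega
  · intro i hi j hj h
    rcases Finset.mem_insert.1 hi with rfl | hi
    · simp only [if_true] at h
      have : j = j0 := by by_contra hh; simp [hh] at h
      simp [this]
    · exact Finset.mem_insert_of_mem (h5 i hi j hj (by simpa [hne i hi] using h))
  · intro D d1 d2 d3
    have z : ∀ j ∈ C, j ≠ j0 → D i0 j = 0 := fun j hj hh =>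
      d1 i0 (Finset.mem_insert_self _ _) j hj (by simp [hh])
    have z0 : D i0 j0 = 0 := by
      rw [← d2 i0 (Finset.mem_insert_self _ _)]
      exact (Finset.sum_eq_single_of_mem j0 hj0 z).symm
    have z' : ∀ j ∈ C, D i0 j = 0 := fun j hj => by
      by_cases hh : j = j0
      · rw [hh, z0]
      · exact z j hj hh
    intro i hi j hj
    rcases Finset.mem_insert.1 hi with rfl | hi
    · exact z' j hj
    · refine h6 D (fun i hi j hj h => d1 i (Finset.mem_insert_of_mem hi) j hj
        (by simpa [hne i hi] using h)) (fun i hi => d2 i (Finset.mem_insert_of_mem hi))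
        (fun j hj => ?_) i hi j hj
      have := d3 j hj
      rwa [Finset.sum_insert hi0, z' j hj, zero_add] at this

theorem TP.all (k : ℕ) : ∀ {α β : Type} [DecidableEq α] [DecidableEq β] (R : Finset α)
    (C : Finset β) (r : α → ℝ) (c : β → ℝ), R.card + C.card = k → R.Nonempty → C.Nonempty →
    (∀ i ∈ R, 0 ≤ r i) → (∀ j ∈ C, 0 ≤ c j) → ∑ i ∈ R, r i = ∑ j ∈ C, c j → TP R C r c := by
  induction k with
  | zero =>
    intro α β _ _ R C r c hk hR
    have := hR.card_pos
    omega
  | succ k ih =>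
    have key : ∀ {α β : Type} [DecidableEq α] [DecidableEq β] (R : Finset α)
        (C : Finset β) (r : α → ℝ) (c : β → ℝ) (i0 : α) (j0 : β), i0 ∈ R → j0 ∈ C →
        R.card + C.card = k + 1 →
        (∀ i ∈ R, 0 ≤ r i) → (∀ j ∈ C, 0 ≤ c j) → ∑ i ∈ R, r i = ∑ j ∈ C, c j →
        r i0 ≤ c j0 → TP R C r c := by
      intro α β _ _ R C r c i0 j0 hi hj hk hr hc hs hle
      rcases (R.erase i0).eq_empty_or_nonempty with he | hne
      · have hR : R = {i0} := by rw [← Finset.insert_erase hi, he]; rfl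
        subst hR
        exact TP.base i0 hc (by simpa using hs)
      · rw [← Finset.insert_erase hi]
        refine TP.step (Finset.notMem_erase _ _) hj (hr i0 hi)
          (ih _ _ _ _ ?_ hne ⟨j0, hj⟩ ?_ ?_ ?_)
        · have := Finset.card_erase_add_one hi
          omega
        · exact fun i hi => hr i (Finset.mem_of_mem_erase hi)
        · intro j hj
          split_ifs with h
          · subst h; linarith
          · simpa using hc j hj
        · rw [Finset.sum_sub_distrib, ← hs, ← Finset.add_sum_erase R r hi]
          simp [hj]
    intro α β _ _ R C r c hk ⟨i0, hi⟩ ⟨j0, hj⟩ hr hc hs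
    rcases le_total (r i0) (c j0) with h | h
    · exact key R C r c i0 j0 hi hj hk hr hc hs h
    · exact (key C R c r j0 i0 hj hi (by omega) hc hr hs.symm h).symm

/-- If there are nonempty proper index sets `I`, `J` with
`∑_{i ∈ I} r_i = ∑_{j ∈ J} c_j`, then the transportation polytope `T_{rc}` has an
extreme point with at least `(m-1)(n-1)+1` zero entries (hence it is not simple). -/
theorem stmt10 (m n : ℕ) (r : Fin m → ℝ) (c : Fin n → ℝ)
    (hr : ∀ i, 0 < r i) (hc : ∀ j, 0 < c j) (hs : ∑ i, r i = ∑ j, c j)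
    (I : Finset (Fin m)) (J : Finset (Fin n))
    (hI : I.Nonempty) (hI' : I ≠ Finset.univ) (hJ : J.Nonempty) (hJ' : J ≠ Finset.univ)
    (hIJ : ∑ i ∈ I, r i = ∑ j ∈ J, c j)
    (T : Set (Matrix (Fin m) (Fin n) ℝ))
    (hT : T = {A | (∀ i j, 0 ≤ A i j) ∧ (∀ i, ∑ j, A i j = r i) ∧
      (∀ j, ∑ i, A i j = c j)}) :
    ∃ A ∈ Set.extremePoints ℝ T,
      (m - 1) * (n - 1) + 1 ≤
        (Finset.univ.filter fun p : Fin m × Fin n => A p.1 p.2 = 0).card := by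
  classical
  have hs' : ∑ i ∈ Iᶜ, r i = ∑ j ∈ Jᶜ, c j := by
    have h1 := Finset.sum_add_sum_compl I r
    have h2 := Finset.sum_add_sum_compl J c
    linarith
  have nI : Iᶜ.Nonempty := by
    rw [Finset.nonempty_iff_ne_empty]; simpa [Finset.compl_eq_empty_iff] using hI'
  have nJ : Jᶜ.Nonempty := by
    rw [Finset.nonempty_iff_ne_empty]; simpa [Finset.compl_eq_empty_iff] using hJ'
  obtain ⟨A, a1, a2, a3, ⟨S, a4, a5⟩, a6⟩ := TP.all _ I J r c rfl hI hJ
    (fun i _ => (hr i).le) (fun j _ => (hc j).le) hIJ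
  obtain ⟨B, b1, b2, b3, ⟨U, b4, b5⟩, b6⟩ := TP.all _ Iᶜ Jᶜ r c rfl nI nJ
    (fun i _ => (hr i).le) (fun j _ => (hc j).le) hs'
  let M : Matrix (Fin m) (Fin n) ℝ := fun i j =>
    if i ∈ I then (if j ∈ J then A i j else 0) else (if j ∈ J then 0 else B i j)
  have m11 : ∀ i ∈ I, ∀ j ∈ J, M i j = A i j := fun i hi j hj => by simp [M, hi, hj]
  have m10 : ∀ i ∈ I, ∀ j ∈ Jᶜ, M i j = 0 := fun i hi j hj => by
    simp [M, hi, Finset.mem_compl.1 hj]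
  have m01 : ∀ i ∈ Iᶜ, ∀ j ∈ J, M i j = 0 := fun i hi j hj => by
    simp [M, Finset.mem_compl.1 hi, hj]
  have m00 : ∀ i ∈ Iᶜ, ∀ j ∈ Jᶜ, M i j = B i j := fun i hi j hj => by
    simp [M, Finset.mem_compl.1 hi, Finset.mem_compl.1 hj]
  have cI : ∀ i, i ∈ I ∨ i ∈ Iᶜ := fun i => by simp [em]
  have cJ : ∀ j, j ∈ J ∨ j ∈ Jᶜ := fun j => by simp [em]
  have hMT : M ∈ T := by
    rw [hT]
    refine ⟨fun i j => ?_, fun i => ?_, fun j => ?_⟩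
    · rcases cI i with hi | hi <;> rcases cJ j with hj | hj
      · rw [m11 i hi j hj]; exact a1 i hi j hj
      · rw [m10 i hi j hj]
      · rw [m01 i hi j hj]
      · rw [m00 i hi j hj]; exact b1 i hi j hj
    · rw [← Finset.sum_add_sum_compl J]
      rcases cI i with hi | hi
      · rw [Finset.sum_congr rfl (m11 i hi), Finset.sum_congr rfl (m10 i hi), a2 i hi]; simp
      · rw [Finset.sum_congr rfl (m01 i hi), Finset.sum_congr rfl (m00 i hi), b2 i hi]; simp
    · rw [← Finset.sum_add_sum_compl I]
      rcases cJ j with hj | hj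
      · rw [Finset.sum_congr rfl (fun i hi => m11 i hi j hj),
          Finset.sum_congr rfl (fun i hi => m01 i hi j hj), a3 j hj]; simp
      · rw [Finset.sum_congr rfl (fun i hi => m10 i hi j hj),
          Finset.sum_congr rfl (fun i hi => m00 i hi j hj), b3 j hj]; simp
  have uniq : ∀ D : Fin m → Fin n → ℝ, (∀ i j, M i j = 0 → D i j = 0) →
      (∀ i, ∑ j, D i j = 0) → (∀ j, ∑ i, D i j = 0) → ∀ i j, D i j = 0 := by
    intro D d1 d2 d3
    have z10 : ∀ i ∈ I, ∀ j ∈ Jᶜ, D i j = 0 := fun i hi j hj => d1 i j (m10 i hi j hj)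
    have z01 : ∀ i ∈ Iᶜ, ∀ j ∈ J, D i j = 0 := fun i hi j hj => d1 i j (m01 i hi j hj)
    have zA := a6 D (fun i hi j hj h => d1 i j (by rw [m11 i hi j hj, h]))
      (fun i hi => by
        have := d2 i
        rwa [← Finset.sum_add_sum_compl J, Finset.sum_eq_zero (z10 i hi), add_zero] at this)
      (fun j hj => by
        have := d3 j
        rwa [← Finset.sum_add_sum_compl I, Finset.sum_eq_zero (s := Iᶜ)
          (fun i hi => z01 i hi j hj), add_zero] at this)
    have zB := b6 D (fun i hi j hj h => d1 i j (by rw [m00 i hi j hj, h]))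
      (fun i hi => by
        have := d2 i
        rwa [← Finset.sum_add_sum_compl J, Finset.sum_eq_zero (z01 i hi), zero_add] at this)
      (fun j hj => by
        have := d3 j
        rwa [← Finset.sum_add_sum_compl I, Finset.sum_eq_zero (s := I)
          (fun i hi => z10 i hi j hj), zero_add] at this)
    intro i j
    rcases cI i with hi | hi <;> rcases cJ j with hj | hj
    · exact zA i hi j hj
    · exact z10 i hi j hj
    · exact z01 i hi j hj
    · exact zB i hi j hj
  refine ⟨M, ?_, ?_⟩
  · rw [mem_extremePoints_iff_left]
    refine ⟨hMT, ?_⟩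
    intro X hX Y hY hseg
    obtain ⟨a, b, ha, hb, hab, hM⟩ := hseg
    rw [hT] at hX hY hMT
    obtain ⟨x1, x2, x3⟩ := hX
    obtain ⟨y1, y2, y3⟩ := hY
    obtain ⟨_, t2, t3⟩ := hMT
    have := uniq (fun i j => X i j - M i j) (fun i j h => by
        have e : a * X i j + b * Y i j = M i j := by rw [← hM]; simp
        have p1 := mul_nonneg ha.le (x1 i j)
        have p2 := mul_nonneg hb.le (y1 i j)
        have p3 : a * X i j = 0 := by linarith
        have p4 : X i j = 0 := (mul_eq_zero.1 p3).resolve_left ha.ne'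
        simp [p4, h])
      (fun i => by rw [Finset.sum_sub_distrib, x2, t2, sub_self])
      (fun j => by rw [Finset.sum_sub_distrib, x3, t3, sub_self])
    ext i j
    exact sub_eq_zero.1 (this i j)
  · have hsub : (Finset.univ.filter fun p : Fin m × Fin n => ¬ M p.1 p.2 = 0) ⊆ S ∪ U := by
      rintro ⟨i, j⟩ h
      have h : M i j ≠ 0 := by simpa using h
      rw [Finset.mem_union]
      rcases cI i with hi | hi <;> rcases cJ j with hj | hj
      · exact Or.inl (a5 i hi j hj (by rwa [m11 i hi j hj] at h))
      · exact absurd (m10 i hi j hj) h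
      · exact absurd (m01 i hi j hj) h
      · exact Or.inr (b5 i hi j hj (by rwa [m00 i hi j hj] at h))
    have q1 := Finset.card_le_card hsub
    have q2 := Finset.card_union_le S U
    have q3 := Finset.card_filter_add_card_filter_not (s := Finset.univ)
      (fun p : Fin m × Fin n => M p.1 p.2 = 0)
    have q4 := Finset.card_add_card_compl I
    have q5 := Finset.card_add_card_compl J
    simp only [Finset.card_univ, Fintype.card_prod, Fintype.card_fin] at q3 q4 q5
    have hIp := hI.card_pos
    have hJp := hJ.card_pos
    obtain ⟨m', rfl⟩ : ∃ m', m = m' + 1 := ⟨m - 1, by omega⟩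
    obtain ⟨n', rfl⟩ : ∃ n', n = n' + 1 := ⟨n - 1, by omega⟩
    have q6 : (m' + 1) * (n' + 1) = m' * n' + m' + n' + 1 := by ring
    simp only [Nat.add_sub_cancel]
    omega
end

section
/- Let r ∈ ℝ^m and c ∈ ℝ^n be vectors of positive reals with Σ_i r_i = Σ_j c_j, and let I ⊆ {1,…,m}, J ⊆ {1,…,n} be nonempty proper subsets with Σ_{i ∈ I} r_i = Σ_{j ∈ J} c_j. Let A′ be an extreme point of the transportation polytope on rows I and columns J (with marginals (r_i)_{i∈I}, (c_j)_{j∈J}) and let A″ be an extreme point of the transportation polytope on rows Iᶜ and columns Jᶜ (with marginals (r_i)_{i∈Iᶜ}, (c_j)_{j∈Jᶜ}). Then the m×n matrix A that agrees with A′ on I×J, agrees with A″ on Iᶜ×Jᶜ, and is zero on I×Jᶜ and Iᶜ×J, is an extreme point of T_{rc}. -/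
theorem sum_split_aux {α : Type*} [Fintype α] [DecidableEq α] (s : Finset α) (f : α → ℝ)
    [i1 : Fintype {a // a ∈ s}] [i2 : Fintype {a // a ∉ s}] :
    ∑ a, f a = ∑ a : {a // a ∈ s}, f a.1 + ∑ a : {a // a ∉ s}, f a.1 := by
  rw [← Fintype.sum_subtype_add_sum_subtype (fun a => a ∈ s) f]
  congr!

/-- Block matrices built from extreme points of the `I × J` and `Iᶜ × Jᶜ`
transportation polytopes are extreme points of `T_{rc}`. -/
theorem stmt11 (m n : ℕ) (r : Fin m → ℝ) (c : Fin n → ℝ)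
    (hr : ∀ i, 0 < r i) (hc : ∀ j, 0 < c j) (hs : ∑ i, r i = ∑ j, c j)
    (I : Finset (Fin m)) (J : Finset (Fin n))
    (hI : I.Nonempty) (hI' : I ≠ Finset.univ) (hJ : J.Nonempty) (hJ' : J ≠ Finset.univ)
    (hIJ : ∑ i ∈ I, r i = ∑ j ∈ J, c j)
    (T : Set (Matrix (Fin m) (Fin n) ℝ))
    (hT : T = {A | (∀ i j, 0 ≤ A i j) ∧ (∀ i, ∑ j, A i j = r i) ∧
      (∀ j, ∑ i, A i j = c j)})
    (T' : Set (Matrix {i // i ∈ I} {j // j ∈ J} ℝ))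
    (hT' : T' = {B | (∀ i j, 0 ≤ B i j) ∧ (∀ i, ∑ j, B i j = r i.1) ∧
      (∀ j, ∑ i, B i j = c j.1)})
    (T'' : Set (Matrix {i // i ∉ I} {j // j ∉ J} ℝ))
    (hT'' : T'' = {B | (∀ i j, 0 ≤ B i j) ∧ (∀ i, ∑ j, B i j = r i.1) ∧
      (∀ j, ∑ i, B i j = c j.1)})
    (A' : Matrix {i // i ∈ I} {j // j ∈ J} ℝ) (hA' : A' ∈ Set.extremePoints ℝ T')
    (A'' : Matrix {i // i ∉ I} {j // j ∉ J} ℝ) (hA'' : A'' ∈ Set.extremePoints ℝ T'')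
    (A : Matrix (Fin m) (Fin n) ℝ)
    (hA : ∀ i j, A i j =
      if hi : i ∈ I then (if hj : j ∈ J then A' ⟨i, hi⟩ ⟨j, hj⟩ else 0)
      else (if hj : j ∈ J then 0 else A'' ⟨i, hi⟩ ⟨j, hj⟩)) :
    A ∈ Set.extremePoints ℝ T := by
  subst hT hT' hT''
  rw [mem_extremePoints_iff_left] at hA' hA'' ⊢
  obtain ⟨⟨p1, q1, s1⟩, e1⟩ := hA'
  obtain ⟨⟨p2, q2, s2⟩, e2⟩ := hA''
  have a11 : ∀ (i : {i // i ∈ I}) (j : {j // j ∈ J}), A i.1 j.1 = A' i j := by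
    intro i j; rw [hA, dif_pos i.2, dif_pos j.2]
  have a12 : ∀ (i : {i // i ∈ I}) (j : {j // j ∉ J}), A i.1 j.1 = 0 := by
    intro i j; rw [hA, dif_pos i.2, dif_neg j.2]
  have a21 : ∀ (i : {i // i ∉ I}) (j : {j // j ∈ J}), A i.1 j.1 = 0 := by
    intro i j; rw [hA, dif_neg i.2, dif_pos j.2]
  have a22 : ∀ (i : {i // i ∉ I}) (j : {j // j ∉ J}), A i.1 j.1 = A'' i j := by
    intro i j; rw [hA, dif_neg i.2, dif_neg j.2]
  refine ⟨⟨?_, ?_, ?_⟩, ?_⟩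
  · intro i j
    rw [hA]
    split_ifs
    · exact p1 _ _
    · exact le_rfl
    · exact le_rfl
    · exact p2 _ _
  · intro i
    rw [sum_split_aux J]
    by_cases hi : i ∈ I
    · have h := q1 ⟨i, hi⟩
      simp only [← a11] at h
      rw [h, Finset.sum_eq_zero (fun j _ => a12 ⟨i, hi⟩ j), add_zero]
    · have h := q2 ⟨i, hi⟩
      simp only [← a22] at h
      rw [h, Finset.sum_eq_zero (fun j _ => a21 ⟨i, hi⟩ j), zero_add]
  · intro j
    rw [sum_split_aux I]
    by_cases hj : j ∈ J
    · have h := s1 ⟨j, hj⟩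
      simp only [← a11] at h
      rw [h, Finset.sum_eq_zero (fun i _ => a21 i ⟨j, hj⟩), add_zero]
    · have h := s2 ⟨j, hj⟩
      simp only [← a22] at h
      rw [h, Finset.sum_eq_zero (fun i _ => a12 i ⟨j, hj⟩), zero_add]
  · rintro X ⟨pX, qX, sX⟩ Y ⟨pY, qY, sY⟩ ⟨a, b, ha, hb, hab, hXY⟩
    have hE : ∀ i j, a * X i j + b * Y i j = A i j := by
      intro i j; rw [← hXY]; simp
    have hz : ∀ i j, A i j = 0 → X i j = 0 ∧ Y i j = 0 := by
      intro i j h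
      have h1 := hE i j
      have h2 := mul_nonneg ha.le (pX i j)
      have h3 := mul_nonneg hb.le (pY i j)
      have h4 : a * X i j = 0 := by linarith
      have h5 : b * Y i j = 0 := by linarith
      exact ⟨(mul_eq_zero.1 h4).resolve_left ha.ne', (mul_eq_zero.1 h5).resolve_left hb.ne'⟩
    have key : ∀ Z : Matrix (Fin m) (Fin n) ℝ, (∀ i j, A i j = 0 → Z i j = 0) →
        (∀ i, ∑ j, Z i j = r i) → (∀ j, ∑ i, Z i j = c j) →
        ((∀ i : {i // i ∈ I}, ∑ j : {j // j ∈ J}, Z i.1 j.1 = r i.1) ∧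
         (∀ j : {j // j ∈ J}, ∑ i : {i // i ∈ I}, Z i.1 j.1 = c j.1)) ∧
        ((∀ i : {i // i ∉ I}, ∑ j : {j // j ∉ J}, Z i.1 j.1 = r i.1) ∧
         (∀ j : {j // j ∉ J}, ∑ i : {i // i ∉ I}, Z i.1 j.1 = c j.1)) := by
      intro Z hZ hq hs
      refine ⟨⟨fun i => ?_, fun j => ?_⟩, ⟨fun i => ?_, fun j => ?_⟩⟩
      · rw [← hq, sum_split_aux J, Finset.sum_eq_zero (fun j _ => hZ _ _ (a12 i j)), add_zero]
      · rw [← hs, sum_split_aux I, Finset.sum_eq_zero (fun i _ => hZ _ _ (a21 i j)), add_zero]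
      · rw [← hq, sum_split_aux J, Finset.sum_eq_zero (fun j _ => hZ _ _ (a21 i j)), zero_add]
      · rw [← hs, sum_split_aux I, Finset.sum_eq_zero (fun i _ => hZ _ _ (a12 i j)), zero_add]
    obtain ⟨kX1, kX2⟩ := key X (fun i j h => (hz i j h).1) qX sX
    obtain ⟨kY1, kY2⟩ := key Y (fun i j h => (hz i j h).2) qY sY
    have r1 := e1 (fun i j => X i.1 j.1) ⟨fun i j => pX _ _, kX1⟩
      (fun i j => Y i.1 j.1) ⟨fun i j => pY _ _, kY1⟩
      ⟨a, b, ha, hb, hab, by ext i j; rw [← a11, ← hE]; rfl⟩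
    have r2 := e2 (fun i j => X i.1 j.1) ⟨fun i j => pX _ _, kX2⟩
      (fun i j => Y i.1 j.1) ⟨fun i j => pY _ _, kY2⟩
      ⟨a, b, ha, hb, hab, by ext i j; rw [← a22, ← hE]; rfl⟩
    ext i j
    by_cases hi : i ∈ I <;> by_cases hj : j ∈ J
    · rw [a11 ⟨i, hi⟩ ⟨j, hj⟩, ← r1]
    · have h := a12 ⟨i, hi⟩ ⟨j, hj⟩
      exact (hz i j h).1.trans h.symm
    · have h := a21 ⟨i, hi⟩ ⟨j, hj⟩
      exact (hz i j h).1.trans h.symm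
    · rw [a22 ⟨i, hi⟩ ⟨j, hj⟩, ← r2]
end

section
/- Let r ∈ ℝ^m and c ∈ ℝ^n be vectors of positive reals with Σ_i r_i = Σ_j c_j, and let I ⊊ {1,…,m}, J ⊊ {1,…,n} be nonempty proper subsets with Σ_{i ∈ I} r_i = Σ_{j ∈ J} c_j. Let (i,j) ∈ I × J, and suppose there exists a matrix A′ in the I×J transportation polytope (with marginals (r_i)_{i∈I}, (c_j)_{j∈J}) such that A′_{ij} = 0 and all other entries of A′ are strictly positive. Then there exists A ∈ T_{rc} with A_{ij} = 0 and all other entries of A strictly positive. (Hence if a_{ij} ≥ 0 defines a facet of the I×J transportation polytope, it also defines a facet of T_{rc}.) -/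
theorem aux_row {m n : ℕ} (r : Fin m → ℝ) (c : Fin n → ℝ)
    (I : Finset (Fin m)) (J : Finset (Fin n)) (S : ℝ) (hS : 0 < S)
    (hSJ : ∑ l ∈ Jᶜ, c l = S)
    (A' : Matrix {i // i ∈ I} {j // j ∈ J} ℝ)
    (hA'r : ∀ k, ∑ l, A' k l = r k.1) (k : Fin m) :
    ∑ l, (if hk : k ∈ I then (if hl : l ∈ J then A' ⟨k, hk⟩ ⟨l, hl⟩ else 0)
      else (if l ∈ J then 0 else r k * c l / S)) = r k := by
  rw [← Finset.sum_add_sum_compl J]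
  by_cases hk : k ∈ I
  · have h2 : ∑ l ∈ Jᶜ, (if hk : k ∈ I then (if hl : l ∈ J then A' ⟨k, hk⟩ ⟨l, hl⟩ else 0)
      else (if l ∈ J then 0 else r k * c l / S)) = 0 := by
      apply Finset.sum_eq_zero
      intro l hl
      have hl' : l ∉ J := by simpa using hl
      simp [hk, hl']
    rw [h2, add_zero, ← Finset.sum_attach, ← hA'r ⟨k, hk⟩]
    apply Finset.sum_congr rfl
    intro l _
    simp [hk]
  · have h1 : ∑ l ∈ J, (if hk : k ∈ I then (if hl : l ∈ J then A' ⟨k, hk⟩ ⟨l, hl⟩ else 0)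
      else (if l ∈ J then 0 else r k * c l / S)) = 0 := by
      apply Finset.sum_eq_zero
      intro l hl
      simp [hk, hl]
    have h2 : ∑ l ∈ Jᶜ, (if hk : k ∈ I then (if hl : l ∈ J then A' ⟨k, hk⟩ ⟨l, hl⟩ else 0)
      else (if l ∈ J then 0 else r k * c l / S)) = ∑ l ∈ Jᶜ, r k * c l / S := by
      apply Finset.sum_congr rfl
      intro l hl
      have hl' : l ∉ J := by simpa using hl
      simp [hk, hl']
    rw [h1, h2, zero_add, ← Finset.sum_div, ← Finset.mul_sum, hSJ]
    field_simp

/-- If `a_{ij} ≥ 0` (with `(i,j) ∈ I × J`) defines a facet of the `I × J`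
transportation polytope — witnessed by a point `A'` of that polytope with
`(i,j)`-entry `0` and all other entries positive — then it defines a facet of
`T_{rc}`: there is `A ∈ T_{rc}` with `A_{ij} = 0` and all other entries positive. -/
theorem stmt13 (m n : ℕ) (r : Fin m → ℝ) (c : Fin n → ℝ)
    (hr : ∀ i, 0 < r i) (hc : ∀ j, 0 < c j) (hs : ∑ i, r i = ∑ j, c j)
    (I : Finset (Fin m)) (J : Finset (Fin n))
    (hI : I.Nonempty) (hI' : I ≠ Finset.univ) (hJ : J.Nonempty) (hJ' : J ≠ Finset.univ)
    (hIJ : ∑ i ∈ I, r i = ∑ j ∈ J, c j)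
    (i : Fin m) (j : Fin n) (hiI : i ∈ I) (hjJ : j ∈ J)
    (A' : Matrix {i // i ∈ I} {j // j ∈ J} ℝ)
    (hA'0 : ∀ k l, 0 ≤ A' k l)
    (hA'r : ∀ k, ∑ l, A' k l = r k.1) (hA'c : ∀ l, ∑ k, A' k l = c l.1)
    (hA'ij : A' ⟨i, hiI⟩ ⟨j, hjJ⟩ = 0)
    (hA'pos : ∀ k l, (k.1, l.1) ≠ (i, j) → 0 < A' k l) :
    ∃ A : Matrix (Fin m) (Fin n) ℝ,
      (∀ k l, 0 ≤ A k l) ∧ (∀ k, ∑ l, A k l = r k) ∧ (∀ l, ∑ k, A k l = c l) ∧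
      A i j = 0 ∧ (∀ k l, (k, l) ≠ (i, j) → 0 < A k l) := by
  obtain ⟨i', hi'⟩ : ∃ i', i' ∉ I := by
    by_contra! h
    exact hI' (Finset.eq_univ_iff_forall.2 h)
  obtain ⟨j', hj'⟩ : ∃ j', j' ∉ J := by
    by_contra! h
    exact hJ' (Finset.eq_univ_iff_forall.2 h)
  obtain ⟨S, hSJ⟩ : ∃ S, ∑ l ∈ Jᶜ, c l = S := ⟨_, rfl⟩
  have hS : 0 < S := by
    rw [← hSJ]
    exact Finset.sum_pos (fun l _ => hc l) ⟨j', by simpa using hj'⟩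
  have hSI : ∑ k ∈ Iᶜ, r k = S := by
    have h1 := Finset.sum_add_sum_compl I r
    have h2 := Finset.sum_add_sum_compl J c
    linarith
  obtain ⟨T, hTc⟩ : ∃ T, ∑ l, c l = T := ⟨_, rfl⟩
  have hT : 0 < T := by
    rw [← hTc]
    exact Finset.sum_pos (fun l _ => hc l) ⟨j', by simp⟩
  have hTr : ∑ k, r k = T := hs.trans hTc
  obtain ⟨B, hB⟩ : ∃ B : Fin m → Fin n → ℝ, ∀ k l, B k l =
    (if hk : k ∈ I then (if hl : l ∈ J then A' ⟨k, hk⟩ ⟨l, hl⟩ else 0)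
      else (if l ∈ J then 0 else r k * c l / S)) := ⟨_, fun _ _ => rfl⟩
  have hBr : ∀ k, ∑ l, B k l = r k := by
    intro k
    simp only [hB]
    exact aux_row r c I J S hS hSJ A' hA'r k
  have hBc : ∀ l, ∑ k, B k l = c l := by
    intro l
    rw [← aux_row c r J I S hS hSI A'.transpose hA'c l]
    apply Finset.sum_congr rfl
    intro k _
    rw [hB]
    by_cases hk : k ∈ I <;> by_cases hl : l ∈ J <;> simp [hk, hl, mul_comm]
  have hB0 : ∀ k l, 0 ≤ B k l := by
    intro k l
    rw [hB]
    have := hr k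
    have := hc l
    split_ifs
    · exact hA'0 _ _
    · exact le_rfl
    · exact le_rfl
    · positivity
  have hBij : B i j = 0 := by
    rw [hB]; simp [hiI, hjJ, hA'ij]
  have hb : 0 < B i' j' := by
    rw [hB]
    have := hr i'
    have := hc j'
    simp only [hi', hj', dite_false, if_false]
    positivity
  have hP : ∀ k l, 0 < r k * c l / T := by
    intro k l
    have := hr k
    have := hc l
    positivity
  have hii : i' ≠ i := by rintro rfl; exact hi' hiI
  have hjj : j' ≠ j := by rintro rfl; exact hj' hjJ
  obtain ⟨q, hq⟩ : ∃ q, r i * c j / T = q := ⟨_, rfl⟩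
  have hq0 : 0 < q := hq ▸ hP i j
  obtain ⟨t, ht0, ht1, ht⟩ : ∃ t : ℝ, 0 < t ∧ t < 1 ∧ t * q < (1 - t) * B i' j' := by
    refine ⟨B i' j' / (2 * (q + B i' j')), by positivity, ?_, ?_⟩
    · rw [div_lt_one (by positivity)]; linarith
    · have : B i' j' / (2 * (q + B i' j')) * (q + B i' j') = B i' j' / 2 := by
        field_simp
      linarith
  let u : Fin m → ℝ := Pi.single i 1 - Pi.single i' 1
  let v : Fin n → ℝ := Pi.single j 1 - Pi.single j' 1
  have hu : ∑ k, u k = 0 := by simp [u]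
  have hv : ∑ l, v l = 0 := by simp [v]
  have hAij : (1 - t) * B i j + t * (r i * c j / T) - t * q * (u i * v j) = 0 := by
    simp [u, v, hBij, hq, hii.symm, hjj.symm]
  have hpos : ∀ k l, (k, l) ≠ (i, j) →
      0 < (1 - t) * B k l + t * (r k * c l / T) - t * q * (u k * v l) := by
    intro k l hkl
    have h1 : 0 ≤ (1 - t) * B k l := mul_nonneg (by linarith) (hB0 k l)
    have h2 : 0 < t * (r k * c l / T) := mul_pos ht0 (hP k l)
    have h3 : 0 < t * q := mul_pos ht0 hq0
    by_cases hki : k = i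
    · subst hki
      have hlj : l ≠ j := by rintro rfl; exact hkl rfl
      by_cases hlj' : l = j'
      · subst hlj'
        simp [u, v, hii.symm, hlj]
        linarith
      · simp [u, v, hii.symm, hlj, hlj']
        linarith
    · by_cases hki' : k = i'
      · subst hki'
        by_cases hlj : l = j
        · subst hlj
          simp [u, v, hki, hjj.symm]
          linarith
        · by_cases hlj' : l = j'
          · subst hlj'
            simp [u, v, hki, hlj]
            linarith
          · simp [u, v, hki, hlj, hlj']
            linarith
      · simp [u, v, hki, hki']
        linarith
  refine ⟨fun k l => (1 - t) * B k l + t * (r k * c l / T) - t * q * (u k * v l),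
    ?_, ?_, ?_, hAij, hpos⟩
  · intro k l
    by_cases h : (k, l) = (i, j)
    · obtain ⟨rfl, rfl⟩ := Prod.mk.inj h
      exact hAij.ge
    · exact (hpos k l h).le
  · intro k
    rw [Finset.sum_sub_distrib, Finset.sum_add_distrib, ← Finset.mul_sum, ← Finset.mul_sum,
      ← Finset.mul_sum, ← Finset.mul_sum, ← Finset.sum_div, ← Finset.mul_sum, hv, hBr, hTc]
    field_simp
    ring
  · intro l
    rw [Finset.sum_sub_distrib, Finset.sum_add_distrib, ← Finset.mul_sum, ← Finset.mul_sum,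
      ← Finset.mul_sum, ← Finset.sum_mul, ← Finset.sum_div, ← Finset.sum_mul, hu, hBc, hTr]
    field_simp
    ring
end
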